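/- Let m̂ ∈ P₂(ℝ^d), R ≥ 0, δ > 0 and u ∈ U. Let m : [s, s+τ] → P₂(ℝ^d) be a W₂-continuous solution of the continuity equation ∂_t m_t + div(f(x,m_t,u)m_t) = 0 with constant control u, with m_s ∈ B_R(m̂) and 0 < τ < δ, and for z ∈ ℝ^d let t ↦ X(s,z,t) denote the solution of the ODE ẋ(t) = f(x(t), m_t, u) with x(s) = z. Then for all t ∈ [s, s+τ]: (∫_{ℝ^d} ‖f(X(s,z,t), m_t, u) − f(z, m_s, u)‖² dm_s(z))^{1/2} ≤ C₃(R)·(t − s), where C₂(R) = C₁e^{C₁δ}(1 + 2(C₁δ + ς₂(m̂) + R)e^{2C₁δ}) and C₃(R) = C₀(C₁e^{C₁δ}(1 + 2(C₁δ + ς₂(m̂) + R)e^{2C₁δ}) + C₂(R)). -/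

import Mathlib

open MeasureTheory Set Filter Topology
open scoped ENNReal NNReal InnerProductSpace

noncomputable section

/-- `ℝ^d` with the Euclidean structure. -/
abbrev Ed (d : ℕ) : Type := EuclideanSpace ℝ (Fin d)

/-- A Borel probability measure with finite second moment. -/
def IsP2Meas {E : Type*} [NormedAddCommGroup E] [MeasurableSpace E] (μ : Measure E) : Prop :=
  IsProbabilityMeasure μ ∧ ∫⁻ x, (‖x‖₊ : ℝ≥0∞) ^ 2 ∂μ < ⊤

/-- The Wasserstein space `P₂(ℝ^d)` of Borel probability measures with finite second moment. -/
def P2 (d : ℕ) : Type := {μ : Measure (Ed d) // IsP2Meas μ}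

/-- `ς₂(μ)`, the square root of the second moment of `μ`. -/
def varsigma2 {d : ℕ} (μ : P2 d) : ℝ :=
  Real.sqrt (∫⁻ x, (‖x‖₊ : ℝ≥0∞) ^ 2 ∂μ.1).toReal

/-- `π` is a plan (coupling) between `μ` and `ν`. -/
def IsCoupling {d : ℕ} (π : Measure (Ed d × Ed d)) (μ ν : P2 d) : Prop :=
  π.map Prod.fst = μ.1 ∧ π.map Prod.snd = ν.1

/-- The quadratic transport cost of a plan. -/
def Wcost {d : ℕ} (π : Measure (Ed d × Ed d)) : ℝ≥0∞ :=
  ∫⁻ p, (‖p.1 - p.2‖₊ : ℝ≥0∞) ^ 2 ∂π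

/-- The 2-Wasserstein distance. -/
def W2 {d : ℕ} (μ ν : P2 d) : ℝ :=
  Real.sqrt (⨅ π ∈ {π : Measure (Ed d × Ed d) | IsCoupling π μ ν}, Wcost π).toReal

/-- `π ∈ Π_o(μ,ν)` : an optimal plan between `μ` and `ν`. -/
def IsOptPlan {d : ℕ} (π : Measure (Ed d × Ed d)) (μ ν : P2 d) : Prop :=
  IsCoupling π μ ν ∧ ∀ π' : Measure (Ed d × Ed d), IsCoupling π' μ ν → Wcost π ≤ Wcost π'

/-- The closed Wasserstein ball `B_R(m̂)`. -/
def ballW {d : ℕ} (mhat : P2 d) (R : ℝ) : Set (P2 d) := {μ | W2 mhat μ ≤ R}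

/-- The open Wasserstein ball `O_R(m̂)`. -/
def oballW {d : ℕ} (mhat : P2 d) (R : ℝ) : Set (P2 d) := {μ | W2 mhat μ < R}

/-- The Dirac measure at the origin as an element of `P₂(ℝ^d)`. -/
def dirac0 (d : ℕ) : P2 d :=
  ⟨Measure.dirac 0, ⟨by infer_instance, by rw [lintegral_dirac]; simp⟩⟩

/-- The class `UC_m̂` : nonnegative, uniformly continuous on every bounded set,
positive-definite at `m̂`. -/
structure UCmem {d : ℕ} (mhat : P2 d) (φ : P2 d → ℝ) : Prop where
  nonneg : ∀ μ : P2 d, 0 ≤ φ μ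
  unif_cont : ∀ R > (0 : ℝ), ∀ η > (0 : ℝ), ∃ δ > (0 : ℝ), ∀ μ ν : P2 d,
    W2 mhat μ ≤ R → W2 mhat ν ≤ R → W2 μ ν ≤ δ → |φ μ - φ ν| ≤ η
  zero_at : φ mhat = 0
  pos_off : ∀ μ : P2 d, μ ≠ mhat → 0 < φ μ

/-- The inf-convolution `φ_κ`. -/
def infConv {d : ℕ} (φ : P2 d → ℝ) (κ : ℝ) (m : P2 d) : ℝ :=
  ⨅ μ : P2 d, (φ μ + 1 / (2 * κ ^ 2) * W2 m μ ^ 2)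

/-- `S(R) = sup_{μ ∈ B_R(m̂)} φ(μ)`. -/
def Sfun {d : ℕ} (mhat : P2 d) (φ : P2 d → ℝ) (R : ℝ) : ℝ := sSup (φ '' ballW mhat R)

/-- `I(R) = inf_{μ ∉ O_R(m̂)} φ(μ)`. -/
def Ifun {d : ℕ} (mhat : P2 d) (φ : P2 d → ℝ) (R : ℝ) : ℝ := sInf (φ '' (oballW mhat R)ᶜ)

/-- `G_R = {μ : φ(μ) ≤ I(R)/2}`. -/
def Gset {d : ℕ} (mhat : P2 d) (φ : P2 d → ℝ) (R : ℝ) : Set (P2 d) :=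
  {μ | φ μ ≤ Ifun mhat φ R / 2}

/-- `G_R^κ = {μ : φ_κ(μ) ≤ I(R)/2}`. -/
def GsetK {d : ℕ} (mhat : P2 d) (φ : P2 d → ℝ) (κ R : ℝ) : Set (P2 d) :=
  {μ | infConv φ κ μ ≤ Ifun mhat φ R / 2}

/-- `𝓡(R) = sup{r ≥ 0 : B_r(m̂) ⊆ G_R}`. -/
def Rfun {d : ℕ} (mhat : P2 d) (φ : P2 d → ℝ) (R : ℝ) : ℝ :=
  sSup {r : ℝ | 0 ≤ r ∧ ballW mhat r ⊆ Gset mhat φ R}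

/-- `M_κ^ε(R) = κ√(2S(R)+ε²κ²) − εκ²`. -/
def Mke {d : ℕ} (mhat : P2 d) (φ : P2 d → ℝ) (κ ε R : ℝ) : ℝ :=
  κ * Real.sqrt (2 * Sfun mhat φ R + ε ^ 2 * κ ^ 2) - ε * κ ^ 2

/-- `M^ε(R) = R + √(2S(R)+ε²)`. -/
def Me {d : ℕ} (mhat : P2 d) (φ : P2 d → ℝ) (ε R : ℝ) : ℝ :=
  R + Real.sqrt (2 * Sfun mhat φ R + ε ^ 2)

/-- `ω_R^ε(δ)`, the modulus of continuity of `φ` on `B_{M^ε(R)}(m̂)`. -/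
def omegaR {d : ℕ} (mhat : P2 d) (φ : P2 d → ℝ) (ε R δ : ℝ) : ℝ :=
  sSup {c : ℝ | ∃ ν₁ ν₂ : P2 d, W2 ν₁ ν₂ ≤ δ ∧ W2 mhat ν₁ ≤ Me mhat φ ε R ∧
    W2 mhat ν₂ ≤ Me mhat φ ε R ∧ c = |φ ν₁ - φ ν₂|}

/-- `K_κ^ε(R) = εκ² + κ√(ε²κ² + 2ω_R^ε(M_κ^ε(R)))`. -/
def Kke {d : ℕ} (mhat : P2 d) (φ : P2 d → ℝ) (κ ε R : ℝ) : ℝ :=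
  ε * κ ^ 2 + κ * Real.sqrt (ε ^ 2 * κ ^ 2 + 2 * omegaR mhat φ ε R (Mke mhat φ κ ε R))

/-- `N_κ^ε(R,m) = εκ√(2φ_κ(m)) + ε·M_κ^ε(R)`. -/
def Nke {d : ℕ} (mhat : P2 d) (φ : P2 d → ℝ) (κ ε R : ℝ) (m : P2 d) : ℝ :=
  ε * κ * Real.sqrt (2 * infConv φ κ m) + ε * Mke mhat φ κ ε R

/-- `μ̄` is an Ekeland point for `(φ,κ,ε,m)`. -/
def EkelandPt {d : ℕ} (φ : P2 d → ℝ) (κ ε : ℝ) (m μb : P2 d) : Prop :=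
  (φ μb + 1 / (2 * κ ^ 2) * W2 m μb ^ 2 ≤ φ m - ε * W2 μb m) ∧
  ∀ μ : P2 d, φ μb + 1 / (2 * κ ^ 2) * W2 m μb ^ 2 ≤
    φ μ + 1 / (2 * κ ^ 2) * W2 m μ ^ 2 + ε * W2 μb μ

/-- The proximal subgradient inequality at `m` with target `μ`, slope measure `α`
and parameter `σ`. -/
def ProxIneq {d : ℕ} (φ : P2 d → ℝ) (ε σ : ℝ) (m : P2 d)
    (α : Measure (Ed d × Ed d)) (μ : P2 d) : Prop :=
  ∀ β : Measure (Ed d × Ed d × Ed d), IsP2Meas β →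
    IsCoupling (β.map fun z => (z.1, z.2.1)) m μ →
    β.map (fun z => (z.1, z.2.2)) = α →
    φ m + ∫ z, ⟪z.2.2, z.2.1 - z.1⟫_ℝ ∂β - σ * ∫ z, ‖z.2.1 - z.1‖ ^ 2 ∂β
      - ε * W2 m μ ≤ φ μ

/-- `α ∈ ∂_P^ε φ(m)` : proximal `ε`-subgradient. -/
def ProxSubgrad {d : ℕ} (φ : P2 d → ℝ) (ε : ℝ) (m : P2 d)
    (α : Measure (Ed d × Ed d)) : Prop :=
  IsP2Meas α ∧ ∃ σ > (0 : ℝ), ∃ r > (0 : ℝ), ∀ μ : P2 d, W2 m μ ≤ r → ProxIneq φ ε σ m α μ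

/-- `(φ,ψ)` is a control-Lyapunov pair at `m̂` for the dynamics `f`, with threshold `ε₀`. -/
structure IsCLP {d : ℕ} {U : Type*} (f : Ed d → P2 d → U → Ed d) (mhat : P2 d)
    (φ : P2 d → ℝ) (ψ : P2 d → ℝ → ℝ) (ε₀ : ℝ) : Prop where
  phi_uc : UCmem mhat φ
  psi_pos : ∀ (m : P2 d) (ε : ℝ), 0 < ε → 0 < ψ m ε
  psi_cont : ∀ (m : P2 d) (ε : ℝ), 0 < ε → ∀ η > (0 : ℝ), ∃ δ > (0 : ℝ),
    ∀ (m' : P2 d) (ε' : ℝ), 0 < ε' → W2 m m' < δ → |ε - ε'| < δ → |ψ m ε - ψ m' ε'| < η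
  level_bdd : ∀ c : ℝ, ∃ K : ℝ, ∀ μ : P2 d, φ μ ≤ c → W2 mhat μ ≤ K
  psi_inf_pos : ∀ r R : ℝ, 0 < r → r < R → ∀ ε > (0 : ℝ), ∃ g > (0 : ℝ),
    ∀ m : P2 d, W2 mhat m ≤ R → ¬ W2 mhat m < r → g ≤ ψ m ε
  psi_mono : ∀ (m : P2 d) (ε ε' : ℝ), 0 < ε → ε ≤ ε' → ψ m ε ≤ ψ m ε'
  eps0_pos : 0 < ε₀
  decrease : ∀ ε : ℝ, 0 < ε → ε < ε₀ → ∀ (m : P2 d) (α : Measure (Ed d × Ed d)),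
    ProxSubgrad φ ε m α → ∃ u : U, ∫ z, ⟪z.2, f z.1 m u⟫_ℝ ∂α ≤ -ψ m ε

/-- A partition of `[0,∞)`. -/
def IsPartition (θ : ℕ → ℝ) : Prop :=
  θ 0 = 0 ∧ StrictMono θ ∧ Tendsto θ atTop atTop

/-- The steps of the partition `θ` lie in `[δ₁, δ₂]` (i.e. `θ ∈ Θ(δ₁,δ₂)`). -/
def StepIn (θ : ℕ → ℝ) (δ₁ δ₂ : ℝ) : Prop :=
  ∀ i : ℕ, δ₁ ≤ θ (i + 1) - θ i ∧ θ (i + 1) - θ i ≤ δ₂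

/-- `W₂`-continuity of a measure-valued curve on `[a,b]`. -/
def W2ContinuousOn {d : ℕ} (m : ℝ → P2 d) (a b : ℝ) : Prop :=
  ∀ t ∈ Icc a b, ∀ η > (0 : ℝ), ∃ δ > (0 : ℝ), ∀ s ∈ Icc a b, |s - t| < δ →
    W2 (m s) (m t) < η

/-- `m` is a `W₂`-continuous distributional solution of the non-local continuity equation
`∂_t m_t + div(f(x,m_t,u) m_t) = 0` on `[a,b]` with constant control `u`. -/
def SolvesCE {d : ℕ} {U : Type*} (f : Ed d → P2 d → U → Ed d) (u : U)
    (m : ℝ → P2 d) (a b : ℝ) : Prop :=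
  W2ContinuousOn m a b ∧
  ∀ χ : Ed d × ℝ → ℝ, ContDiff ℝ (⊤ : ℕ∞) χ → HasCompactSupport χ →
    tsupport χ ⊆ univ ×ˢ Ioo a b →
    ∫ t in a..b, ∫ x, (deriv (fun s : ℝ => χ (x, s)) t +
      fderiv ℝ (fun y : Ed d => χ (y, t)) x (f x (m t) u)) ∂(m t).1 = 0

/-- A `θ`-trajectory of the controlled continuity equation under the feedback `k`,
starting from `m_*`. -/
def IsTraj {d : ℕ} {U : Type*} (f : Ed d → P2 d → U → Ed d) (k : P2 d → U)
    (θ : ℕ → ℝ) (mstar : P2 d) (m : ℝ → P2 d) : Prop :=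
  m 0 = mstar ∧ ∀ i : ℕ, SolvesCE f (k (m (θ i))) m (θ i) (θ (i + 1))

/-- The extremal-shift value `∫ ((x−y)/κ²)·f(x,m,u) dπ(x,y)`. -/
def shiftVal {d : ℕ} {U : Type*} (f : Ed d → P2 d → U → Ed d) (κ : ℝ)
    (π : Measure (Ed d × Ed d)) (m : P2 d) (u : U) : ℝ :=
  ∫ p, ⟪(κ ^ 2)⁻¹ • (p.1 - p.2), f p.1 m u⟫_ℝ ∂π

/-- `k` is an extremal-shift feedback associated with the plan selection `πsel`. -/
def IsExtremalShift {d : ℕ} {U : Type*} (f : Ed d → P2 d → U → Ed d) (κ : ℝ)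
    (πsel : P2 d → Measure (Ed d × Ed d)) (k : P2 d → U) : Prop :=
  ∀ (m : P2 d) (u : U), shiftVal f κ (πsel m) m (k m) ≤ shiftVal f κ (πsel m) m u

/-- `C₂(R)` (computed with time-step bound `δ` and `s = ς₂(m̂)`). -/
def C2const (C₁ δ s R : ℝ) : ℝ :=
  C₁ * Real.exp (C₁ * δ) * (1 + 2 * (C₁ * δ + s + R) * Real.exp (2 * C₁ * δ))

/-- `C₃(R)` (computed with time-step bound `δ` and `s = ς₂(m̂)`). -/
def C3const (C₀ C₁ δ s R : ℝ) : ℝ :=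
  C₀ * (C₁ * Real.exp (C₁ * δ) * (1 + 2 * (C₁ * δ + s + R) * Real.exp (2 * C₁ * δ))
    + C2const C₁ δ s R)

/-- A feedback `k` is s-stabilizing at `m̂`. -/
def SStabilizing {d : ℕ} {U : Type*} (f : Ed d → P2 d → U → Ed d) (mhat : P2 d)
    (k : P2 d → U) : Prop :=
  ∃ M : ℝ → ℝ, (∀ R > (0 : ℝ), 0 < M R) ∧
    Tendsto M (nhdsWithin 0 (Ioi 0)) (nhds 0) ∧
    ∀ r R : ℝ, 0 < r → r < R → ∃ δ > (0 : ℝ), ∃ T > (0 : ℝ),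
      ∀ δhat : ℝ, 0 < δhat → δhat < δ →
      ∀ θ : ℕ → ℝ, IsPartition θ → StepIn θ δhat δ →
      ∀ mstar : P2 d, W2 mhat mstar ≤ R →
      ∀ m : ℝ → P2 d, IsTraj f k θ mstar m →
        (∀ t : ℝ, T ≤ t → W2 mhat (m t) ≤ r) ∧ (∀ t : ℝ, 0 ≤ t → W2 mhat (m t) ≤ M R)

/-!
A Lipschitz velocity field has a two-sided flow `Φ`. For a test function `φ`, the map
`t ↦ ∫ φ (Φ t b x) dm_t` is constant: `φ ∘ Φ t b` is only Lipschitz, but its mollifications are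
admissible test functions, and mollification commutes with the flow from `a` to `t` up to
`O(radius * |t - a|)`. Hence `m_t` is the image of `m_s` under the characteristics `X t = Φ s t`.

The coupling `(X t, id)` then bounds `W₂(m_t, m_s)` by the displacement `‖X t - id‖` in `L²(m_s)`.
Grönwall's inequality yields `ς₂(m_t) ≤ S := (C₁ δ + ς₂(m̂) + R) e^{2 C₁ δ}`, and, once more along
each characteristic, a displacement of at most `C₂(R) (t - s)`. The velocity moves by at most `C₀`
times the displacement plus `C₀ W₂(m_t, m_s)`, which gives `C₃(R) = 2 C₀ C₂(R)`.
-/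

section Gronwall

variable {E : Type*} [NormedAddCommGroup E] [NormedSpace ℝ E] {x x' : ℝ → E} {A M a b : ℝ}

theorem exp_sub_one_le_mul_exp (x : ℝ) : Real.exp x - 1 ≤ x * Real.exp x := by
  have hmul : Real.exp (-x) * Real.exp x = 1 := by rw [← Real.exp_add]; simp
  nlinarith [Real.add_one_le_exp (-x), Real.exp_pos x]

theorem gronwallBound_mul_right (y₀ A c x : ℝ) :
    gronwallBound y₀ A (A * c) x = y₀ * Real.exp (A * x) + c * (Real.exp (A * x) - 1) := by
  rcases eq_or_ne A 0 with rfl | hA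
  · simp [gronwallBound_K0]
  · simp only [gronwallBound_of_K_ne_0 hA, mul_div_cancel_left₀ _ hA]

theorem norm_sub_le_mul_exp_sub_one_of_le (hA : 0 ≤ A) (hab : a ≤ b)
    (hx : ∀ t ∈ Icc a b, HasDerivWithinAt x (x' t) (Icc a b) t)
    (hx' : ∀ t ∈ Icc a b, ‖x' t‖ ≤ A * (‖x t‖ + M)) :
    ‖x b - x a‖ ≤ (‖x a‖ + M) * (Real.exp (A * (b - a)) - 1) := by
  rw [← zero_add (_ * (_ - 1)), ← zero_mul (Real.exp (A * (b - a))), ← gronwallBound_mul_right]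
  refine norm_le_gronwallBound_of_norm_deriv_right_le (f := fun t => x t - x a)
    (fun t ht => ((hx t ht).sub_const _).continuousWithinAt)
    (fun t ht => ((hx t (Ico_subset_Icc_self ht)).sub_const _).mono_of_mem_nhdsWithin
      (Icc_mem_nhdsGE_of_mem ht)) (by simp) (fun t ht => ?_) b (right_mem_Icc.2 hab)
  have htri : ‖x t‖ ≤ ‖x t - x a‖ + ‖x a‖ := norm_le_norm_sub_add _ _
  calc ‖x' t‖ ≤ A * (‖x t‖ + M) := hx' t (Ico_subset_Icc_self ht)
    _ ≤ A * (‖x t - x a‖ + ‖x a‖ + M) := by gcongr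
    _ = A * ‖x t - x a‖ + A * (‖x a‖ + M) := by ring

theorem norm_sub_le_mul_exp_abs_sub_one (hA : 0 ≤ A)
    (hx : ∀ t ∈ uIcc a b, HasDerivWithinAt x (x' t) (uIcc a b) t)
    (hx' : ∀ t ∈ uIcc a b, ‖x' t‖ ≤ A * (‖x t‖ + M)) :
    ‖x b - x a‖ ≤ (‖x a‖ + M) * (Real.exp (A * |b - a|) - 1) := by
  rcases le_total a b with hab | hba
  · rw [uIcc_of_le hab] at hx hx'
    rw [abs_of_nonneg (sub_nonneg.2 hab)]
    exact norm_sub_le_mul_exp_sub_one_of_le hA hab hx hx'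
  · rw [uIcc_of_ge hba] at hx hx'
    have hmaps : MapsTo (fun t => b + a - t) (Icc b a) (Icc b a) := fun t ht =>
      ⟨by linarith [ht.2], by linarith [ht.1]⟩
    have hreversed := norm_sub_le_mul_exp_sub_one_of_le (x := fun t => x (b + a - t))
      (x' := fun t => (-1 : ℝ) • x' (b + a - t)) (M := M) hA hba
      (fun t ht => (hx _ (hmaps ht)).scomp t ((hasDerivWithinAt_id t _).const_sub (b + a)) hmaps)
      (fun t ht => by simpa using hx' _ (hmaps ht))
    simpa [abs_of_nonpos (sub_nonpos.2 hba)] using hreversed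

end Gronwall

section Slope

theorem eventually_forall_uIcc {P : ℝ → Prop} {s T a : ℝ} (ha : a ∈ Icc s T)
    (hP : ∀ᶠ q in 𝓝[Icc s T] a, P q) : ∀ᶠ t in 𝓝[Icc s T] a, ∀ q ∈ uIcc a t, P q :=
  (((tendsto_const_pure.mono_right (pure_le_nhdsWithin ha)).uIcc tendsto_id).eventually
    hP.smallSets).mono fun _ h q hq => h q hq

theorem norm_image_sub_le_of_eventually_norm_sub_le {E : Type*} [NormedAddCommGroup E] {f : ℝ → E}
    {a b C : ℝ} (hab : a ≤ b)
    (hf : ∀ t ∈ Icc a b, ∀ r > C, ∀ᶠ z in 𝓝[Icc a b] t, ‖f z - f t‖ ≤ r * |z - t|) :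
    ‖f b - f a‖ ≤ C * (b - a) := by
  have hcont : ContinuousOn f (Icc a b) := fun t ht => by
    have hlim : Tendsto (fun z => (C + 1) * |z - t|) (𝓝[Icc a b] t) (𝓝 0) :=
      tendsto_nhdsWithin_of_tendsto_nhds (Continuous.tendsto' (by fun_prop) _ _ (by simp))
    exact tendsto_iff_norm_sub_tendsto_zero.2 (squeeze_zero'
      (Eventually.of_forall fun z => norm_nonneg _) (hf t ht (C + 1) (lt_add_one C)) hlim)
  refine image_le_of_liminf_slope_right_le_deriv_boundary (f := fun t => ‖f t - f a‖)
    (B := fun t => C * (t - a)) (B' := fun _ => C) (by fun_prop) (by simp) (by fun_prop)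
    (fun t _ => by simpa using (((hasDerivWithinAt_id t (Ici t)).sub_const a).const_mul C))
    (fun t ht r hr => Eventually.frequently ?_) (right_mem_Icc.2 hab)
  obtain ⟨r', hCr', hr'r⟩ := exists_between hr
  have hright : 𝓝[>] t ≤ 𝓝[Icc a b] t := nhdsWithin_le_of_mem (Icc_mem_nhdsGT_of_mem ht)
  filter_upwards [hright (hf t (Ico_subset_Icc_self ht) r' hCr'), self_mem_nhdsWithin] with z hz htz
  have hzt : 0 < z - t := sub_pos.2 htz
  rw [slope_def_field, div_lt_iff₀ hzt]
  calc ‖f z - f a‖ - ‖f t - f a‖ ≤ ‖f z - f t‖ := by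
        simpa using norm_sub_norm_le (f z - f a) (f t - f a)
    _ ≤ r' * (z - t) := by rwa [abs_of_pos hzt] at hz
    _ < r * (z - t) := by gcongr

theorem eventually_le_add_mul_of_le_add_mul_exp_sub_one {y : ℝ → ℝ} {A t T r : ℝ}
    (hyt : 0 ≤ y t) (hy : ContinuousWithinAt y (Icc t T) t) (htT : t < T)
    (hstep : ∀ b ∈ Icc t T, ∀ M, (∀ q ∈ Icc t b, y q ≤ M) →
      y b ≤ y t + (y t + (1 + M)) * (Real.exp (A * (b - t)) - 1))
    (hr : A * (1 + 2 * y t) < r) : ∀ᶠ b in 𝓝[>] t, y b ≤ y t + r * (b - t) := by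
  obtain ⟨M, hMr, hyM⟩ : ∃ M, A * (y t + (1 + M)) < r ∧ y t < M := by
    have hlim : Tendsto (fun M => A * (y t + (1 + M))) (𝓝[>] (y t)) (𝓝 (A * (1 + 2 * y t))) :=
      tendsto_nhdsWithin_of_tendsto_nhds (Continuous.tendsto' (by fun_prop) _ _ (by ring))
    exact ((hlim.eventually_lt_const hr).and self_mem_nhdsWithin).exists
  have hexp : ∀ᶠ b in 𝓝[>] t, A * (y t + (1 + M)) * Real.exp (A * (b - t)) < r :=
    (tendsto_nhdsWithin_of_tendsto_nhds
      (Continuous.tendsto' (by fun_prop) _ (A * (y t + (1 + M))) (by simp))).eventually_lt_const hMr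
  have hright : 𝓝[>] t ≤ 𝓝[Icc t T] t :=
    nhdsWithin_le_of_mem (Icc_mem_nhdsGT_of_mem (left_mem_Ico.2 htT))
  filter_upwards [hexp, hright (eventually_forall_uIcc (left_mem_Icc.2 htT.le)
    (hy.eventually_lt_const hyM)), hright self_mem_nhdsWithin] with b hexpb hyb hb
  have hM : 0 ≤ y t + (1 + M) := by linarith
  have hbt : 0 ≤ b - t := sub_nonneg.2 hb.1
  calc y b ≤ y t + (y t + (1 + M)) * (Real.exp (A * (b - t)) - 1) :=
        hstep b hb M fun q hq => (hyb q (Icc_subset_uIcc hq)).le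
    _ ≤ y t + (y t + (1 + M)) * (A * (b - t) * Real.exp (A * (b - t))) := by
        gcongr; exact exp_sub_one_le_mul_exp _
    _ = y t + A * (y t + (1 + M)) * Real.exp (A * (b - t)) * (b - t) := by ring
    _ ≤ y t + r * (b - t) := by gcongr

/-- Letting `b` tend to `a` in `hstep` bounds the upper right derivative of `y` by
`A * (1 + 2 * y)`. -/
theorem le_mul_exp_of_le_add_mul_exp_sub_one {y : ℝ → ℝ} {A s T t : ℝ}
    (hy0 : ∀ t ∈ Icc s T, 0 ≤ y t) (hy : ContinuousOn y (Icc s T))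
    (hstep : ∀ a ∈ Icc s T, ∀ b ∈ Icc a T, ∀ M, (∀ q ∈ Icc a b, y q ≤ M) →
      y b ≤ y a + (y a + (1 + M)) * (Real.exp (A * (b - a)) - 1)) (ht : t ∈ Icc s T) :
    y t ≤ (y s + A * (t - s)) * Real.exp (2 * A * (t - s)) := by
  have hgronwall := le_gronwallBound_of_liminf_deriv_right_le (f := y)
    (f' := fun t => A * (1 + 2 * y t)) (δ := y s) (K := 2 * A) (ε := 2 * A * (1 / 2)) hy
    (fun a ha r hr => Eventually.frequently ?_) le_rfl (fun a _ => by linarith) t ht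
  · rw [gronwallBound_mul_right] at hgronwall
    linarith [exp_sub_one_le_mul_exp (2 * A * (t - s))]
  · have ha' := Ico_subset_Icc_self ha
    obtain ⟨r', hr', hr'r⟩ := exists_between hr
    filter_upwards [eventually_le_add_mul_of_le_add_mul_exp_sub_one (hy0 a ha')
      ((hy a ha').mono (Icc_subset_Icc_left ha.1)) ha.2 (hstep a ha') hr',
      self_mem_nhdsWithin] with b hyb hab
    rw [inv_mul_lt_iff₀ (sub_pos.2 hab)]
    nlinarith [sub_pos.2 (mem_Ioi.1 hab)]

end Slope

section Flow

variable {E : Type*} [NormedAddCommGroup E] [NormedSpace ℝ E] {v : ℝ → E → E} {s T a b c t : ℝ}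

theorem norm_sub_sub_le_of_lipschitzWith {K : ℝ≥0} {x y : ℝ → E}
    (hv : ∀ t ∈ Icc s T, LipschitzWith K (v t))
    (hx : ∀ t ∈ Icc s T, HasDerivWithinAt x (v t (x t)) (Icc s T) t)
    (hy : ∀ t ∈ Icc s T, HasDerivWithinAt y (v t (y t)) (Icc s T) t)
    (ha : a ∈ Icc s T) (hb : b ∈ Icc s T) :
    ‖(x b - y b) - (x a - y a)‖ ≤ ‖x a - y a‖ * (Real.exp (K * |b - a|) - 1) := by
  have hsub : uIcc a b ⊆ Icc s T := uIcc_subset_Icc ha hb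
  simpa using norm_sub_le_mul_exp_abs_sub_one (x := fun t => x t - y t) (M := 0) K.coe_nonneg
    (fun t ht => ((hx t (hsub ht)).sub (hy t (hsub ht))).mono hsub)
    (fun t ht => by simpa using (hv t (hsub ht)).norm_sub_le (x t) (y t))

theorem eqOn_of_hasDerivWithinAt {K : ℝ≥0} {x y : ℝ → E}
    (hv : ∀ t ∈ Icc s T, LipschitzWith K (v t))
    (hx : ∀ t ∈ Icc s T, HasDerivWithinAt x (v t (x t)) (Icc s T) t)
    (hy : ∀ t ∈ Icc s T, HasDerivWithinAt y (v t (y t)) (Icc s T) t)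
    (ha : a ∈ Icc s T) (hxy : x a = y a) : EqOn x y (Icc s T) := fun b hb => by
  have hle := norm_sub_sub_le_of_lipschitzWith hv hx hy ha hb
  rw [hxy, sub_self, norm_zero, zero_mul, sub_zero] at hle
  exact sub_eq_zero.1 (norm_le_zero_iff.1 hle)

/-- `Φ` is the two-parameter flow of the time-dependent vector field `v` on the time interval
`[s, T]`: `t ↦ Φ a t x` is the integral curve passing through `x` at time `a`, followed forwards
and backwards from `a`. -/
structure IsFlow (v : ℝ → E → E) (s T : ℝ) (Φ : ℝ → ℝ → E → E) : Prop where
  self : ∀ a ∈ Icc s T, ∀ x, Φ a a x = x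
  hasDerivWithinAt : ∀ a ∈ Icc s T, ∀ x, ∀ t ∈ Icc s T,
    HasDerivWithinAt (fun t => Φ a t x) (v t (Φ a t x)) (Icc s T) t

namespace IsFlow

variable {Φ : ℝ → ℝ → E → E} {K : ℝ≥0} {A M : ℝ}

theorem apply_apply (hΦ : IsFlow v s T Φ) (hv : ∀ t ∈ Icc s T, LipschitzWith K (v t))
    (ha : a ∈ Icc s T) (hb : b ∈ Icc s T) (hc : c ∈ Icc s T) (x : E) :
    Φ b c (Φ a b x) = Φ a c x :=
  eqOn_of_hasDerivWithinAt hv (hΦ.hasDerivWithinAt b hb _) (hΦ.hasDerivWithinAt a ha x) hb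
    (hΦ.self b hb _) hc

theorem norm_sub_sub_le (hΦ : IsFlow v s T Φ) (hv : ∀ t ∈ Icc s T, LipschitzWith K (v t))
    (ha : a ∈ Icc s T) (hb : b ∈ Icc s T) (x y : E) :
    ‖(Φ a b x - Φ a b y) - (x - y)‖ ≤ ‖x - y‖ * (Real.exp (K * |b - a|) - 1) := by
  simpa [hΦ.self a ha] using norm_sub_sub_le_of_lipschitzWith hv
    (hΦ.hasDerivWithinAt a ha x) (hΦ.hasDerivWithinAt a ha y) ha hb

theorem lipschitzWith (hΦ : IsFlow v s T Φ) (hv : ∀ t ∈ Icc s T, LipschitzWith K (v t))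
    (ha : a ∈ Icc s T) (hb : b ∈ Icc s T) :
    LipschitzWith (Real.exp (K * (T - s))).toNNReal (Φ a b) := by
  refine LipschitzWith.of_dist_le' fun x y => ?_
  rw [dist_eq_norm, dist_eq_norm]
  have habs : |b - a| ≤ T - s := abs_sub_le_of_le_of_le hb.1 hb.2 ha.1 ha.2
  calc ‖Φ a b x - Φ a b y‖
      ≤ ‖(Φ a b x - Φ a b y) - (x - y)‖ + ‖x - y‖ := norm_le_norm_sub_add _ _
    _ ≤ ‖x - y‖ * (Real.exp (K * |b - a|) - 1) + ‖x - y‖ := by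
        gcongr; exact hΦ.norm_sub_sub_le hv ha hb x y
    _ = Real.exp (K * |b - a|) * ‖x - y‖ := by ring
    _ ≤ Real.exp (K * (T - s)) * ‖x - y‖ := by gcongr

theorem continuous (hΦ : IsFlow v s T Φ) (hv : ∀ t ∈ Icc s T, LipschitzWith K (v t))
    (ha : a ∈ Icc s T) (hb : b ∈ Icc s T) : Continuous (Φ a b) :=
  (hΦ.lipschitzWith hv ha hb).continuous

theorem hasCompactSupport_comp {F : Type*} [Zero F] (hΦ : IsFlow v s T Φ)
    (hv : ∀ t ∈ Icc s T, LipschitzWith K (v t)) (ha : a ∈ Icc s T) (hb : b ∈ Icc s T) {φ : E → F}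
    (hφ : HasCompactSupport φ) : HasCompactSupport (φ ∘ Φ a b) :=
  hφ.comp_homeomorph
    { toFun := Φ a b
      invFun := Φ b a
      left_inv := fun x => by rw [hΦ.apply_apply hv ha hb ha, hΦ.self a ha]
      right_inv := fun x => by rw [hΦ.apply_apply hv hb ha hb, hΦ.self b hb]
      continuous_toFun := hΦ.continuous hv ha hb
      continuous_invFun := hΦ.continuous hv hb ha }

theorem norm_sub_le (hΦ : IsFlow v s T Φ) (hA : 0 ≤ A) (ha : a ∈ Icc s T) (hb : b ∈ Icc s T)
    (hv : ∀ t ∈ uIcc a b, ∀ x, ‖v t x‖ ≤ A * (‖x‖ + M)) (x : E) :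
    ‖Φ a b x - x‖ ≤ (‖x‖ + M) * (Real.exp (A * |b - a|) - 1) := by
  have hsub : uIcc a b ⊆ Icc s T := uIcc_subset_Icc ha hb
  simpa [hΦ.self a ha] using norm_sub_le_mul_exp_abs_sub_one (x := fun t => Φ a t x) (M := M) hA
    (fun t ht => (hΦ.hasDerivWithinAt a ha x t (hsub ht)).mono hsub) fun t ht => hv t ht _

end IsFlow

variable {K : ℝ≥0} {X : E → ℝ → E}

/-- A preimage of `y` is a fixed point of `y' ↦ y - (X (σ y') b - y')`, where `σ` is a right
inverse of `X · a`; this map is a contraction because over a short time the flow differs from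
the identity by a map of small Lipschitz constant. -/
theorem surjective_of_surjective_of_exp_lt [CompleteSpace E]
    (hv : ∀ t ∈ Icc s T, LipschitzWith K (v t))
    (hX : ∀ z, ∀ t ∈ Icc s T, HasDerivWithinAt (X z) (v t (X z t)) (Icc s T) t)
    (ha : a ∈ Icc s T) (hb : b ∈ Icc s T) (hsurj : Function.Surjective (X · a))
    (hexp : Real.exp (K * |b - a|) - 1 < 1) : Function.Surjective (X · b) := fun y => by
  obtain ⟨σ, hσ⟩ := hsurj.hasRightInverse
  have hcontr : ContractingWith (Real.exp (K * |b - a|) - 1).toNNReal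
      fun y' => y - (X (σ y') b - y') := by
    refine ⟨by rwa [Real.toNNReal_lt_one], LipschitzWith.of_dist_le' fun y₁ y₂ => ?_⟩
    have hle := norm_sub_sub_le_of_lipschitzWith hv (hX (σ y₁)) (hX (σ y₂)) ha hb
    simp only [show X (σ y₁) a = y₁ from hσ y₁, show X (σ y₂) a = y₂ from hσ y₂] at hle
    calc dist (y - (X (σ y₁) b - y₁)) (y - (X (σ y₂) b - y₂))
        = ‖(X (σ y₁) b - X (σ y₂) b) - (y₁ - y₂)‖ := by
          rw [dist_sub_left, dist_eq_norm, sub_sub_sub_comm]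
      _ ≤ (Real.exp (K * |b - a|) - 1) * dist y₁ y₂ := by
          rwa [mul_comm, dist_eq_norm]
  have hfix : y - (X (σ (hcontr.fixedPoint _)) b - hcontr.fixedPoint _) = hcontr.fixedPoint _ :=
    hcontr.fixedPoint_isFixedPt
  exact ⟨σ (hcontr.fixedPoint _),
    ((sub_eq_iff_eq_add.1 hfix).trans (add_sub_cancel _ _)).symm⟩

theorem surjective_of_hasDerivWithinAt [CompleteSpace E]
    (hv : ∀ t ∈ Icc s T, LipschitzWith K (v t)) (hXs : ∀ z, X z s = z)
    (hX : ∀ z, ∀ t ∈ Icc s T, HasDerivWithinAt (X z) (v t (X z t)) (Icc s T) t)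
    (ht : t ∈ Icc s T) : Function.Surjective (X · t) := by
  obtain ⟨h, hh, hexp⟩ : ∃ h > 0, Real.exp (K * h) - 1 < 1 := by
    have hev : ∀ᶠ h in 𝓝[>] (0 : ℝ), Real.exp (K * h) - 1 < 1 :=
      ((by fun_prop : Continuous fun h : ℝ => Real.exp (K * h) - 1).tendsto' 0 0 (by simp)
        |>.mono_left nhdsWithin_le_nhds).eventually_lt_const one_pos
    exact (hev.and self_mem_nhdsWithin).exists.imp fun h hh => ⟨hh.2, hh.1⟩
  have hsteps : ∀ n : ℕ, ∀ t ∈ Icc s T, t ≤ s + n * h → Function.Surjective (X · t) := by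
    intro n
    induction n with
    | zero =>
      intro t ht hts y
      obtain rfl : t = s := le_antisymm (by simpa using hts) ht.1
      exact ⟨y, hXs y⟩
    | succ n ih =>
      intro t ht htn
      have hmax : max s (t - h) ≤ t := max_le ht.1 (by linarith)
      refine surjective_of_surjective_of_exp_lt hv hX ⟨le_max_left _ _, hmax.trans ht.2⟩ ht
        (ih _ ⟨le_max_left _ _, hmax.trans ht.2⟩ ?_) (lt_of_le_of_lt ?_ hexp)
      · push_cast at htn
        exact max_le (by nlinarith [n.cast_nonneg (α := ℝ)]) (by linarith)
      · rw [abs_of_nonneg (sub_nonneg.2 hmax)]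
        gcongr
        linarith [le_max_right s (t - h)]
  obtain ⟨n, hn⟩ := exists_nat_ge ((t - s) / h)
  exact hsteps n t ht (by rw [div_le_iff₀ hh] at hn; linarith)

theorem exists_isFlow_of_hasDerivWithinAt [CompleteSpace E]
    (hv : ∀ t ∈ Icc s T, LipschitzWith K (v t)) (hXs : ∀ z, X z s = z)
    (hX : ∀ z, ∀ t ∈ Icc s T, HasDerivWithinAt (X z) (v t (X z t)) (Icc s T) t) :
    ∃ Φ, IsFlow v s T Φ ∧ ∀ z t, Φ s t z = X z t :=
  ⟨fun a t x => X (Function.invFun (X · a) x) t,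
    { self := fun _ ha x =>
        Function.invFun_eq (surjective_of_hasDerivWithinAt hv hXs hX ha x)
      hasDerivWithinAt := fun _ _ _ t ht => hX _ t ht },
    fun z t => by
      have hs : Function.invFun (X · s) z = z := by
        simp only [hXs]
        exact Function.leftInverse_invFun Function.injective_id z
      simp only [hs]⟩

end Flow

section Mollification

variable {E F : Type*} [NormedAddCommGroup E] [NormedSpace ℝ E] [FiniteDimensional ℝ E]
  [MeasureSpace E] [BorelSpace E] [(volume : Measure E).IsAddHaarMeasure]
  [NormedAddCommGroup F] [NormedSpace ℝ F]

/-- The mollification of `g` by the normalised bump function `β`, an average of the values of `g`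
at distance less than `β.rOut`. -/
def mollify (β : ContDiffBump (0 : E)) (g : E → F) : E → F :=
  convolution (β.normed volume) g (ContinuousLinearMap.lsmul ℝ ℝ) volume

variable (β : ContDiffBump (0 : E)) {g h : E → F} {x y : E} {c : ℝ} {K : ℝ≥0}

theorem contDiff_mollify (hg : Continuous g) {n : ℕ∞} : ContDiff ℝ n (mollify β g) :=
  β.hasCompactSupport_normed.contDiff_convolution_left _ β.contDiff_normed hg.locallyIntegrable

theorem hasCompactSupport_mollify (hg : HasCompactSupport g) : HasCompactSupport (mollify β g) :=
  β.hasCompactSupport_normed.convolution _ hg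

variable [CompleteSpace F]

theorem norm_mollify_sub_mollify_le (hg : Continuous g) (hh : Continuous h)
    (hgh : ∀ w ∈ Metric.ball 0 β.rOut, ‖g (x + w) - h (y + w)‖ ≤ c) :
    ‖mollify β g x - mollify β h y‖ ≤ c := by
  have hdiff : mollify β g x - mollify β h y = mollify β (fun w => g (x + w) - h (y + w)) 0 := by
    have hexists : ∀ k : E → F, Continuous k → ∀ x,
        ConvolutionExistsAt (β.normed volume) k x (ContinuousLinearMap.lsmul ℝ ℝ) volume :=
      fun k hk => β.hasCompactSupport_normed.convolutionExists_left_of_continuous_right _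
        (β.continuous_normed.locallyIntegrable) hk
    simp only [mollify, convolution_def]
    rw [← integral_sub (hexists g hg x) (hexists h hh y)]
    simp only [map_sub, zero_sub, ← sub_eq_add_neg]
  have hcenter : ‖g x - h y‖ ≤ c := by simpa using hgh 0 (Metric.mem_ball_self β.rOut_pos)
  rw [hdiff, ← dist_zero_right]
  refine dist_convolution_le ((norm_nonneg _).trans hcenter) β.support_normed_eq.subset
    β.nonneg_normed β.integral_normed (by fun_prop) fun w hw => ?_
  simpa using hgh w hw

theorem norm_mollify_sub_self_le (hg : LipschitzWith K g) (x : E) :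
    ‖mollify β g x - g x‖ ≤ K * β.rOut := by
  rw [← dist_eq_norm]
  refine β.dist_normed_convolution_le hg.continuous.aestronglyMeasurable fun y hy => ?_
  exact (hg.dist_le_mul y x).trans (by gcongr; exact (Metric.mem_ball.1 hy).le)

theorem lipschitzWith_mollify (hg : LipschitzWith K g) : LipschitzWith K (mollify β g) := by
  refine LipschitzWith.of_dist_le_mul fun x y => ?_
  rw [dist_eq_norm]
  refine norm_mollify_sub_mollify_le β hg.continuous hg.continuous fun w _ => ?_
  simpa [dist_eq_norm] using hg.norm_sub_le (x + w) (y + w)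

theorem norm_mollify_comp_sub_le (hg : LipschitzWith K g) {f : E → E} (hf : Continuous f)
    (hc : 0 ≤ c) (hfc : ∀ x y, ‖(f x - f y) - (x - y)‖ ≤ ‖x - y‖ * c) (x : E) :
    ‖mollify β (g ∘ f) x - mollify β g (f x)‖ ≤ K * (β.rOut * c) := by
  refine norm_mollify_sub_mollify_le β (hg.continuous.comp hf) hg.continuous fun w hw => ?_
  calc ‖g (f (x + w)) - g (f x + w)‖ ≤ K * ‖f (x + w) - (f x + w)‖ := hg.norm_sub_le _ _
    _ = K * ‖(f (x + w) - f x) - (x + w - x)‖ := by rw [add_sub_cancel_left, sub_sub]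
    _ ≤ K * (‖x + w - x‖ * c) := by gcongr; exact hfc _ _
    _ ≤ K * (β.rOut * c) := by
      rw [add_sub_cancel_left]
      gcongr
      exact (mem_ball_zero_iff.1 hw).le

theorem IsFlow.norm_mollify_comp_flow_sub_le {v : ℝ → E → E} {s T a b : ℝ} {Φ : ℝ → ℝ → E → E}
    {L : ℝ≥0} (hΦ : IsFlow v s T Φ) (hv : ∀ t ∈ Icc s T, LipschitzWith K (v t))
    (hg : LipschitzWith L g) (ha : a ∈ Icc s T) (hb : b ∈ Icc s T) (x : E) :
    ‖mollify β (g ∘ Φ a b) x - mollify β g (Φ a b x)‖ ≤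
      L * β.rOut * K * Real.exp (K * |b - a|) * |b - a| := by
  have hexp : 0 ≤ Real.exp (K * |b - a|) - 1 := sub_nonneg.2 (Real.one_le_exp (by positivity))
  calc ‖mollify β (g ∘ Φ a b) x - mollify β g (Φ a b x)‖
      ≤ L * (β.rOut * (Real.exp (K * |b - a|) - 1)) :=
        norm_mollify_comp_sub_le β hg (hΦ.continuous hv ha hb) hexp
          (hΦ.norm_sub_sub_le hv ha hb) x
    _ ≤ L * (β.rOut * (K * |b - a| * Real.exp (K * |b - a|))) := by
        gcongr
        · exact β.rOut_pos.le
        · exact exp_sub_one_le_mul_exp _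
    _ = L * β.rOut * K * Real.exp (K * |b - a|) * |b - a| := by ring

end Mollification

section Wasserstein

theorem lintegral_nnnorm_sq_eq_eLpNorm_sq {Ω F : Type*} [MeasurableSpace Ω]
    [NormedAddCommGroup F] (ρ : Measure Ω) (g : Ω → F) :
    ∫⁻ x, (‖g x‖₊ : ℝ≥0∞) ^ 2 ∂ρ = eLpNorm g 2 ρ ^ 2 := by
  simpa [enorm_eq_nnnorm] using (eLpNorm_nnreal_pow_eq_lintegral (f := g) (μ := ρ)
    (two_ne_zero : (2 : ℝ≥0) ≠ 0)).symm

theorem abs_toReal_eLpNorm_sub_le {Ω F : Type*} [MeasurableSpace Ω] [NormedAddCommGroup F]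
    {ρ : Measure Ω} {p : ℝ≥0∞} [Fact (1 ≤ p)] {f g : Ω → F} (hf : MemLp f p ρ)
    (hg : MemLp g p ρ) :
    |(eLpNorm f p ρ).toReal - (eLpNorm g p ρ).toReal| ≤ (eLpNorm (f - g) p ρ).toReal := by
  simpa only [← MemLp.toLp_sub, Lp.norm_toLp] using abs_norm_sub_norm_le (hf.toLp f) (hg.toLp g)

theorem norm_integral_sub_integral_le_of_norm_sub_le {Ω F : Type*} [MeasurableSpace Ω]
    [NormedAddCommGroup F] [NormedSpace ℝ F] {ρ : Measure Ω} [IsProbabilityMeasure ρ] {f g : Ω → F}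
    {C : ℝ} (hf : Integrable f ρ) (hg : Integrable g ρ) (hfg : ∀ x, ‖f x - g x‖ ≤ C) :
    ‖∫ x, f x ∂ρ - ∫ x, g x ∂ρ‖ ≤ C := by
  rw [← integral_sub hf hg]
  exact (norm_integral_le_of_norm_le_const (Eventually.of_forall hfg)).trans (by simp)

variable {d : ℕ} {μ ν : P2 d} {π : Measure (Ed d × Ed d)}

instance (μ : P2 d) : IsProbabilityMeasure μ.1 := μ.2.1

theorem memLp_id_P2 (μ : P2 d) : MemLp id 2 μ.1 := by
  refine ⟨aestronglyMeasurable_id, ?_⟩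
  have hmoment := μ.2.2
  rw [lintegral_nnnorm_sq_eq_eLpNorm_sq μ.1 fun x => x] at hmoment
  exact (ENNReal.pow_lt_top_iff.1 hmoment).resolve_right two_ne_zero

theorem memLp_P2_of_lipschitzWith {F : Type*} [NormedAddCommGroup F] {K : ℝ≥0} {g : Ed d → F}
    (hg : LipschitzWith K g) (μ : P2 d) : MemLp g 2 μ.1 := by
  refine ((memLp_const ‖g 0‖).add ((memLp_id_P2 μ).norm.const_mul (K : ℝ))).mono'
    hg.continuous.aestronglyMeasurable (Eventually.of_forall fun x => ?_)
  have hx : ‖g x - g 0‖ ≤ K * ‖x‖ := by simpa using hg.norm_sub_le x 0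
  exact (norm_le_norm_add_norm_sub' _ _).trans (add_le_add_right hx _)

theorem integrable_P2_of_lipschitzWith {F : Type*} [NormedAddCommGroup F] {K : ℝ≥0}
    {g : Ed d → F} (hg : LipschitzWith K g) (μ : P2 d) : Integrable g μ.1 :=
  (memLp_P2_of_lipschitzWith hg μ).integrable one_le_two

theorem varsigma2_eq_toReal_eLpNorm (μ : P2 d) : varsigma2 μ = (eLpNorm id 2 μ.1).toReal := by
  rw [varsigma2, lintegral_nnnorm_sq_eq_eLpNorm_sq μ.1 fun x => x, ENNReal.toReal_pow,
    Real.sqrt_sq ENNReal.toReal_nonneg]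
  rfl

theorem varsigma2_nonneg (μ : P2 d) : 0 ≤ varsigma2 μ := Real.sqrt_nonneg _

theorem W2_nonneg (μ ν : P2 d) : 0 ≤ W2 μ ν := Real.sqrt_nonneg _

theorem memLp_fst_of_isCoupling (h : IsCoupling π μ ν) : MemLp Prod.fst 2 π :=
  (h.1 ▸ memLp_id_P2 μ : MemLp id 2 (π.map Prod.fst)).comp_of_map (by fun_prop)

theorem memLp_snd_of_isCoupling (h : IsCoupling π μ ν) : MemLp Prod.snd 2 π :=
  (h.2 ▸ memLp_id_P2 ν : MemLp id 2 (π.map Prod.snd)).comp_of_map (by fun_prop)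

theorem isProbabilityMeasure_of_isCoupling (h : IsCoupling π μ ν) : IsProbabilityMeasure π :=
  have : IsProbabilityMeasure (π.map Prod.fst) := h.1 ▸ μ.2.1
  Measure.isProbabilityMeasure_of_map Prod.fst

theorem Wcost_eq_eLpNorm_sq (π : Measure (Ed d × Ed d)) :
    Wcost π = eLpNorm (Prod.fst - Prod.snd) 2 π ^ 2 := by
  rw [Wcost, lintegral_nnnorm_sq_eq_eLpNorm_sq π fun p => p.1 - p.2]
  rfl

theorem Wcost_ne_top_of_isCoupling (h : IsCoupling π μ ν) : Wcost π ≠ ⊤ := by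
  rw [Wcost_eq_eLpNorm_sq]
  exact ENNReal.pow_ne_top ((memLp_fst_of_isCoupling h).sub (memLp_snd_of_isCoupling h)).2.ne

theorem W2_le_toReal_eLpNorm_sub {Ω : Type*} [MeasurableSpace Ω] {ρ : Measure Ω}
    {X Y : Ω → Ed d} (hX : Measurable X) (hY : Measurable Y) (hXμ : ρ.map X = μ.1)
    (hYν : ρ.map Y = ν.1) : W2 μ ν ≤ (eLpNorm (X - Y) 2 ρ).toReal := by
  have hcoupling : IsCoupling (ρ.map fun ω => (X ω, Y ω)) μ ν :=
    ⟨(Measure.fst_map_prodMk hY).trans hXμ, (Measure.snd_map_prodMk hX).trans hYν⟩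
  have hcost : Wcost (ρ.map fun ω => (X ω, Y ω)) = eLpNorm (X - Y) 2 ρ ^ 2 := by
    rw [Wcost_eq_eLpNorm_sq, eLpNorm_map_measure (by fun_prop) (by fun_prop)]
    rfl
  refine Real.sqrt_le_iff.2 ⟨ENNReal.toReal_nonneg, ?_⟩
  rw [← ENNReal.toReal_pow, ← hcost]
  exact ENNReal.toReal_mono (Wcost_ne_top_of_isCoupling hcoupling)
    (iInf₂_le (_ : Measure (Ed d × Ed d)) hcoupling)

theorem exists_isCoupling_toReal_eLpNorm_sub_lt (μ ν : P2 d) {c : ℝ} (hc : W2 μ ν < c) :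
    ∃ π, IsCoupling π μ ν ∧ (eLpNorm (Prod.fst - Prod.snd) 2 π).toReal < c := by
  have hc0 : 0 < c := (W2_nonneg μ ν).trans_lt hc
  have hprod : IsCoupling (μ.1.prod ν.1) μ ν := ⟨by simp, by simp⟩
  have hfinite : (⨅ π ∈ {π : Measure (Ed d × Ed d) | IsCoupling π μ ν}, Wcost π) ≠ ⊤ :=
    ne_top_of_le_ne_top (Wcost_ne_top_of_isCoupling hprod) (iInf₂_le (μ.1.prod ν.1) hprod)
  rw [W2, Real.sqrt_lt' hc0, ← ENNReal.lt_ofReal_iff_toReal_lt hfinite] at hc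
  simp only [iInf_lt_iff] at hc
  obtain ⟨π, hπ, hlt⟩ := hc
  rw [ENNReal.lt_ofReal_iff_toReal_lt hlt.ne_top, Wcost_eq_eLpNorm_sq, ENNReal.toReal_pow] at hlt
  exact ⟨π, hπ, lt_of_pow_lt_pow_left₀ 2 hc0.le hlt⟩

theorem W2_self (μ : P2 d) : W2 μ μ = 0 := by
  have hle := W2_le_toReal_eLpNorm_sub (μ := μ) (ν := μ) measurable_id measurable_id
    Measure.map_id Measure.map_id
  rw [sub_self, eLpNorm_zero, ENNReal.toReal_zero] at hle
  exact hle.antisymm (W2_nonneg μ μ)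

theorem abs_varsigma2_sub_le_W2 (μ ν : P2 d) : |varsigma2 μ - varsigma2 ν| ≤ W2 μ ν := by
  refine le_of_forall_gt_imp_ge_of_dense fun c hc => ?_
  obtain ⟨π, hπ, hlt⟩ := exists_isCoupling_toReal_eLpNorm_sub_lt μ ν hc
  have hfst : varsigma2 μ = (eLpNorm Prod.fst 2 π).toReal := by
    rw [varsigma2_eq_toReal_eLpNorm, ← hπ.1, eLpNorm_map_measure (by fun_prop) (by fun_prop),
      Function.id_comp]
  have hsnd : varsigma2 ν = (eLpNorm Prod.snd 2 π).toReal := by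
    rw [varsigma2_eq_toReal_eLpNorm, ← hπ.2, eLpNorm_map_measure (by fun_prop) (by fun_prop),
      Function.id_comp]
  rw [hfst, hsnd]
  exact (abs_toReal_eLpNorm_sub_le (memLp_fst_of_isCoupling hπ)
    (memLp_snd_of_isCoupling hπ)).trans hlt.le

theorem norm_integral_sub_integral_le_mul_W2 {F : Type*} [NormedAddCommGroup F]
    [NormedSpace ℝ F] {K : ℝ≥0} {g : Ed d → F} (hg : LipschitzWith K g) (μ ν : P2 d) :
    ‖∫ x, g x ∂μ.1 - ∫ x, g x ∂ν.1‖ ≤ K * W2 μ ν := by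
  have hbound : ∀ c > W2 μ ν, ‖∫ x, g x ∂μ.1 - ∫ x, g x ∂ν.1‖ ≤ K * c := by
    intro c hc
    obtain ⟨π, hπ, hlt⟩ := exists_isCoupling_toReal_eLpNorm_sub_lt μ ν hc
    have := isProbabilityMeasure_of_isCoupling hπ
    have hmem := (memLp_fst_of_isCoupling hπ).sub (memLp_snd_of_isCoupling hπ)
    have hfst : Integrable (fun p : Ed d × Ed d => g p.1) π :=
      (hπ.1 ▸ integrable_P2_of_lipschitzWith hg μ).comp_measurable (by fun_prop)
    have hsnd : Integrable (fun p : Ed d × Ed d => g p.2) π :=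
      (hπ.2 ▸ integrable_P2_of_lipschitzWith hg ν).comp_measurable (by fun_prop)
    have hgm : ∀ ρ : Measure (Ed d), AEStronglyMeasurable g ρ := fun ρ =>
      hg.continuous.aestronglyMeasurable
    calc ‖∫ x, g x ∂μ.1 - ∫ x, g x ∂ν.1‖ = ‖∫ p, g p.1 - g p.2 ∂π‖ := by
          rw [integral_sub hfst hsnd, ← hπ.1, ← hπ.2, integral_map (by fun_prop) (hgm _),
            integral_map (by fun_prop) (hgm _)]
      _ ≤ ∫ p, K * ‖(Prod.fst - Prod.snd : Ed d × Ed d → Ed d) p‖ ∂π :=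
          norm_integral_le_of_norm_le ((hmem.integrable one_le_two).norm.const_mul _)
            (Eventually.of_forall fun p => hg.norm_sub_le p.1 p.2)
      _ = K * ∫ p, ‖(Prod.fst - Prod.snd : Ed d × Ed d → Ed d) p‖ ∂π := integral_const_mul _ _
      _ ≤ K * (eLpNorm (Prod.fst - Prod.snd) 2 π).toReal := by
          gcongr
          rw [integral_norm_eq_lintegral_enorm hmem.1, ← eLpNorm_one_eq_lintegral_enorm]
          exact ENNReal.toReal_mono hmem.2.ne
            (eLpNorm_le_eLpNorm_of_exponent_le one_le_two hmem.1)
      _ ≤ K * c := by gcongr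
  exact ge_of_tendsto ((continuous_const_mul (K : ℝ)).continuousWithinAt (s := Ioi (W2 μ ν)))
    (eventually_mem_nhdsWithin.mono hbound)

variable {m : ℝ → P2 d} {s T t : ℝ}

theorem tendsto_W2_of_W2ContinuousOn (hm : W2ContinuousOn m s T) (ht : t ∈ Icc s T) :
    Tendsto (fun q => W2 (m q) (m t)) (𝓝[Icc s T] t) (𝓝 0) := by
  refine Metric.tendsto_nhdsWithin_nhds.2 fun η hη => ?_
  obtain ⟨δ, hδ, hW⟩ := hm t ht η hη
  exact ⟨δ, hδ, fun {q} hq hqt => by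
    simpa [abs_of_nonneg (W2_nonneg _ _)] using hW q hq (by rwa [← Real.dist_eq])⟩

theorem continuousOn_of_exists_norm_sub_le_mul_W2 {F : Type*} [NormedAddCommGroup F]
    (hm : W2ContinuousOn m s T) {G : ℝ → F}
    (hG : ∀ t ∈ Icc s T, ∃ c, ∀ q ∈ Icc s T, ‖G q - G t‖ ≤ c * W2 (m q) (m t)) :
    ContinuousOn G (Icc s T) := by
  intro t ht
  obtain ⟨c, hc⟩ := hG t ht
  refine tendsto_iff_norm_sub_tendsto_zero.2 <|
    squeeze_zero_norm' (a := fun q => c * W2 (m q) (m t))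
      (eventually_mem_nhdsWithin.mono fun q hq => by simpa using hc q hq)
      (by simpa using (tendsto_W2_of_W2ContinuousOn hm ht).const_mul c)

theorem continuousOn_integral_of_lipschitzWith {F : Type*} [NormedAddCommGroup F]
    [NormedSpace ℝ F] (hm : W2ContinuousOn m s T) {K : ℝ≥0} {g : Ed d → F}
    (hg : LipschitzWith K g) : ContinuousOn (fun t => ∫ x, g x ∂(m t).1) (Icc s T) :=
  continuousOn_of_exists_norm_sub_le_mul_W2 hm fun t _ =>
    ⟨K, fun q _ => norm_integral_sub_integral_le_mul_W2 hg (m q) (m t)⟩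

end Wasserstein

section DuBoisReymond

variable {F : Type*} [NormedAddCommGroup F] [NormedSpace ℝ F] {a b p q : ℝ}

theorem exists_contDiff_deriv_eq_of_integral_eq_zero [CompleteSpace F] {g : ℝ → F}
    (hg : ContDiff ℝ (⊤ : ℕ∞) g) (hgpq : Function.support g ⊆ Icc p q) (hint : ∫ t, g t = 0) :
    ∃ η : ℝ → F, ContDiff ℝ (⊤ : ℕ∞) η ∧ tsupport η ⊆ Icc p q ∧ deriv η = g := by
  have hzero : ∀ t ∉ Icc p q, g t = 0 := Function.support_subset_iff'.1 hgpq
  have hgint : Integrable g := hg.continuous.integrable_of_hasCompactSupport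
    (HasCompactSupport.of_support_subset_isCompact isCompact_Icc hgpq)
  have hprimitive : (fun t => ∫ x in Iic t, g x) =
      fun t => (∫ x in Iic p, g x) + ∫ x in p..t, g x := by
    ext t
    rw [← intervalIntegral.integral_Iic_sub_Iic hgint.integrableOn hgint.integrableOn,
      add_sub_cancel]
  have hderiv : ∀ t, HasDerivAt (fun t => ∫ x in Iic t, g x) (g t) t := fun t => by
    rw [hprimitive]
    exact (hg.continuous.integral_hasStrictDerivAt p t).hasDerivAt.const_add _
  have hdg : deriv (fun t => ∫ x in Iic t, g x) = g := funext fun t => (hderiv t).deriv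
  refine ⟨fun t => ∫ x in Iic t, g x, contDiff_infty_iff_deriv.2
    ⟨fun t => (hderiv t).differentiableAt, hdg.symm ▸ hg⟩, ?_, hdg⟩
  refine closure_minimal (fun t ht => ?_) isClosed_Icc
  by_contra htpq
  rcases not_and_or.1 htpq with hpt | htq
  · exact ht (setIntegral_eq_zero_of_forall_eq_zero fun x hx =>
      hzero x fun hxpq => hpt (hxpq.1.trans hx))
  · refine ht ((setIntegral_eq_integral_of_forall_compl_eq_zero fun x hx => ?_).trans hint)
    exact hzero x fun hxpq => htq ((not_le.1 hx).le.trans hxpq.2)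

theorem exists_subset_Icc_subset_Ioo_of_isCompact {S : Set ℝ} (hab : a < b) (hS : IsCompact S)
    (hSab : S ⊆ Ioo a b) : ∃ p q, S ⊆ Icc p q ∧ Icc p q ⊆ Ioo a b := by
  obtain ⟨c, hc⟩ := nonempty_Ioo.2 hab
  obtain ⟨p, hp⟩ := (hS.insert c).exists_isLeast (insert_nonempty c S)
  obtain ⟨q, hq⟩ := (hS.insert c).exists_isGreatest (insert_nonempty c S)
  have hsub : insert c S ⊆ Ioo a b := insert_subset hc hSab
  exact ⟨p, q, fun x hx => ⟨hp.2 (mem_insert_of_mem c hx), hq.2 (mem_insert_of_mem c hx)⟩,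
    Icc_subset_Ioo (hsub hp.1).1 (hsub hq.1).2⟩

theorem integral_smul_eq_intervalIntegral_of_tsupport_subset {k : ℝ → ℝ}
    (hk : tsupport k ⊆ Ioo a b) (D : ℝ → F) : ∫ t, k t • D t = ∫ t in a..b, k t • D t :=
  (intervalIntegral.integral_eq_integral_of_support_subset fun _ ht =>
    Ioo_subset_Ioc_self (hk (subset_tsupport k (left_ne_zero_of_smul ht)))).symm

/-- `g - (∫ g) w` has integral zero, so it is the derivative of a test function. -/
theorem integral_smul_eq_smul_integral_smul {D : ℝ → F} (hab : a < b)
    (hD : ContinuousOn D (Icc a b))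
    (h : ∀ η : ℝ → ℝ, ContDiff ℝ (⊤ : ℕ∞) η → HasCompactSupport η → tsupport η ⊆ Ioo a b →
      ∫ t in a..b, deriv η t • D t = 0) {g w : ℝ → ℝ}
    (hg : ContDiff ℝ (⊤ : ℕ∞) g) (hgc : HasCompactSupport g) (hgab : tsupport g ⊆ Ioo a b)
    (hw : ContDiff ℝ (⊤ : ℕ∞) w) (hwc : HasCompactSupport w) (hwab : tsupport w ⊆ Ioo a b)
    (hwint : ∫ t, w t = 1) :
    ∫ t in a..b, g t • D t = (∫ t, g t) • ∫ t in a..b, w t • D t := by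
  have hintegrable : ∀ {k : ℝ → ℝ}, Continuous k →
      IntervalIntegrable (fun t => k t • D t) volume a b := fun hk =>
    (hk.continuousOn.smul (by rwa [uIcc_of_le hab.le])).intervalIntegrable
  have hkint : ∫ t, (g t - (∫ t, g t) * w t) = 0 := by
    rw [integral_sub (hg.continuous.integrable_of_hasCompactSupport hgc)
      ((hw.continuous.integrable_of_hasCompactSupport hwc).const_mul _), integral_const_mul,
      hwint, mul_one, sub_self]
  obtain ⟨p, q, hsub, hpq⟩ := exists_subset_Icc_subset_Ioo_of_isCompact hab
    (hgc.isCompact.union hwc.isCompact) (union_subset hgab hwab)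
  have hksupp : Function.support (fun t => g t - (∫ t, g t) * w t) ⊆ Icc p q := by
    refine Function.support_subset_iff'.2 fun t ht => ?_
    have htgw := mt (@hsub t) ht
    rw [mem_union, not_or] at htgw
    simp only [image_eq_zero_of_notMem_tsupport htgw.1, image_eq_zero_of_notMem_tsupport htgw.2,
      mul_zero, sub_zero]
  obtain ⟨η, hη, hηpq, hderiv⟩ := exists_contDiff_deriv_eq_of_integral_eq_zero
    (hg.sub (contDiff_const.mul hw)) hksupp hkint
  have hkD := h η hη (isCompact_Icc.of_isClosed_subset (isClosed_tsupport η) hηpq)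
    (hηpq.trans hpq)
  have hwD : IntervalIntegrable (fun t => (∫ t, g t) • w t • D t) volume a b :=
    (hintegrable hw.continuous).smul _
  simp only [hderiv, sub_smul, mul_smul] at hkD
  rwa [intervalIntegral.integral_sub (hintegrable hg.continuous) hwD,
    intervalIntegral.integral_smul, sub_eq_zero] at hkD

theorem exists_eqOn_const_of_integral_deriv_smul_eq_zero [CompleteSpace F] {D : ℝ → F}
    (hab : a < b) (hD : ContinuousOn D (Icc a b))
    (h : ∀ η : ℝ → ℝ, ContDiff ℝ (⊤ : ℕ∞) η → HasCompactSupport η → tsupport η ⊆ Ioo a b →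
      ∫ t in a..b, deriv η t • D t = 0) :
    ∃ c, EqOn D (fun _ => c) (Icc a b) := by
  let w : ContDiffBump ((a + b) / 2) := ⟨(b - a) / 8, (b - a) / 4, by linarith, by linarith⟩
  have hw : tsupport (w.normed volume) ⊆ Ioo a b := by
    rw [w.tsupport_normed_eq, Real.closedBall_eq_Icc]
    exact Icc_subset_Ioo (by simp only [w]; linarith) (by simp only [w]; linarith)
  set c := ∫ t in a..b, w.normed volume t • D t
  have hDc : ContinuousOn (fun t => D t - c) (Icc a b) := hD.sub continuousOn_const
  have hae : ∀ᵐ t, t ∈ Ioo a b → D t - c = 0 := by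
    refine isOpen_Ioo.ae_eq_zero_of_integral_contDiff_smul_eq_zero
      ((hDc.mono Ioo_subset_Icc_self).locallyIntegrableOn measurableSet_Ioo)
      fun g hg hgc hgab => ?_
    have hgD : IntervalIntegrable (fun t => g t • D t) volume a b :=
      (hg.continuous.continuousOn.smul (by rwa [uIcc_of_le hab.le])).intervalIntegrable
    have hgc' : IntervalIntegrable (fun t => g t • c) volume a b :=
      (hg.continuous.smul continuous_const).intervalIntegrable a b
    rw [integral_smul_eq_intervalIntegral_of_tsupport_subset hgab]
    simp only [smul_sub]
    rw [intervalIntegral.integral_sub hgD hgc',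
      ← integral_smul_eq_intervalIntegral_of_tsupport_subset hgab fun _ => c, integral_smul_const,
      integral_smul_eq_smul_integral_smul hab hD h hg hgc hgab w.contDiff_normed
        w.hasCompactSupport_normed hw w.integral_normed, sub_self]
  refine ⟨c, Measure.eqOn_Icc_of_ae_eq volume hab.ne ?_ hD continuousOn_const⟩
  rw [← restrict_Ioo_eq_restrict_Icc]
  exact (ae_restrict_iff' measurableSet_Ioo).2 (hae.mono fun t ht htab => sub_eq_zero.1 (ht htab))

theorem hasDerivWithinAt_intervalIntegral_of_continuousOn [CompleteSpace F] {H : ℝ → F}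
    (hH : ContinuousOn H (Icc a b)) {t : ℝ} (ht : t ∈ Icc a b) :
    HasDerivWithinAt (fun t => ∫ q in a..t, H q) (H t) (Icc a b) t := by
  have : Fact (t ∈ Icc a b) := ⟨ht⟩
  exact intervalIntegral.integral_hasDerivWithinAt_right
    (hH.mono (uIcc_subset_Icc (left_mem_Icc.2 (ht.1.trans ht.2)) ht)).intervalIntegrable
    (hH.stronglyMeasurableAtFilter_nhdsWithin measurableSet_Icc t) (hH t ht)

/-- With `P` a primitive of `H`, integration by parts turns the hypothesis into
`∫ η' • (G - P) = 0`. -/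
theorem hasDerivWithinAt_of_integral_deriv_smul_add_smul_eq_zero [CompleteSpace F] {G H : ℝ → F}
    (hG : ContinuousOn G (Icc a b)) (hH : ContinuousOn H (Icc a b))
    (h : ∀ η : ℝ → ℝ, ContDiff ℝ (⊤ : ℕ∞) η → HasCompactSupport η → tsupport η ⊆ Ioo a b →
      ∫ t in a..b, (deriv η t • G t + η t • H t) = 0) {t : ℝ} (ht : t ∈ Icc a b) :
    HasDerivWithinAt G (H t) (Icc a b) t := by
  rcases (ht.1.trans ht.2).eq_or_lt with rfl | hab
  · exact HasFDerivWithinAt.of_subsingleton (by simp)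
  have hP : ∀ t ∈ Icc a b, HasDerivWithinAt (fun t => ∫ q in a..t, H q) (H t) (Icc a b) t :=
    fun t => hasDerivWithinAt_intervalIntegral_of_continuousOn hH
  have hPc : ContinuousOn (fun t => ∫ q in a..t, H q) (Icc a b) := fun t ht =>
    (hP t ht).continuousWithinAt
  obtain ⟨c, hc⟩ := exists_eqOn_const_of_integral_deriv_smul_eq_zero hab (hG.sub hPc)
    fun η hη hηc hηab => by
      have hvanish : ∀ t ∉ Ioo a b, η t = 0 := fun t ht =>
        image_eq_zero_of_notMem_tsupport (mt (@hηab t) ht)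
      have hη' : Continuous (deriv η) := hη.continuous_deriv (by simp)
      have hintegrable : ∀ {k : ℝ → ℝ} {D : ℝ → F}, Continuous k → ContinuousOn D (Icc a b) →
          IntervalIntegrable (fun t => k t • D t) volume a b := fun hk hD =>
        (hk.continuousOn.smul (by rwa [uIcc_of_le hab.le])).intervalIntegrable
      have hparts : ∫ t in a..b, η t • H t = -∫ t in a..b, deriv η t • ∫ q in a..t, H q := by
        rw [← uIcc_of_le hab.le] at hP hH
        rw [intervalIntegral.integral_smul_deriv_eq_deriv_smul_of_hasDerivWithinAt
          (fun t _ => (hη.differentiable (by simp) t).hasDerivAt.hasDerivWithinAt) hP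
          (hη'.intervalIntegrable a b) hH.intervalIntegrable, hvanish a fun ha => lt_irrefl a ha.1,
          hvanish b fun hb => lt_irrefl b hb.2, zero_smul, zero_smul, sub_zero, zero_sub]
      have hηGH := h η hη hηc hηab
      rw [intervalIntegral.integral_add (hintegrable hη' hG) (hintegrable hη.continuous hH),
        hparts, ← sub_eq_add_neg,
        ← intervalIntegral.integral_sub (hintegrable hη' hG) (hintegrable hη' hPc)] at hηGH
      simpa only [Pi.sub_apply, smul_sub] using hηGH
  refine (((hP t ht).add_const c).congr (fun q hq => ?_) ?_)
  · exact (sub_eq_iff_eq_add'.1 (hc hq))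
  · exact (sub_eq_iff_eq_add'.1 (hc ht))

end DuBoisReymond

section ContinuityEquation

variable {E : Type*} [NormedAddCommGroup E] [NormedSpace ℝ E] {K : ℝ≥0}

theorem exists_lipschitzWith_fderiv_apply {g : E → ℝ}
    (hg : ContDiff ℝ (⊤ : ℕ∞) g) (hgc : HasCompactSupport g) {w : E → E} (hw : LipschitzWith K w) :
    ∃ L, LipschitzWith L fun x => fderiv ℝ g x (w x) := by
  have hg' : ContDiff ℝ (⊤ : ℕ∞) (fderiv ℝ g) := (contDiff_infty_iff_fderiv.1 hg).2
  have hgc' : HasCompactSupport (fderiv ℝ g) := hgc.fderiv ℝ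
  obtain ⟨K', hK'⟩ := hg'.lipschitzWith_of_hasCompactSupport hgc' (by simp)
  obtain ⟨G, hG⟩ := hgc'.exists_bound_of_continuous hg'.continuous
  obtain ⟨B, hB⟩ := hgc'.isCompact.exists_bound_of_continuousOn hw.continuous.continuousOn
  have hmem : ∀ x ∈ tsupport (fderiv ℝ g), ∀ y,
      ‖fderiv ℝ g x (w x) - fderiv ℝ g y (w y)‖ ≤ (K' * B + G * K) * ‖x - y‖ := by
    intro x hx y
    calc ‖fderiv ℝ g x (w x) - fderiv ℝ g y (w y)‖
        = ‖(fderiv ℝ g x - fderiv ℝ g y) (w x) + fderiv ℝ g y (w x - w y)‖ := by simp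
      _ ≤ ‖fderiv ℝ g x - fderiv ℝ g y‖ * ‖w x‖ + ‖fderiv ℝ g y‖ * ‖w x - w y‖ :=
          norm_add_le_of_le (ContinuousLinearMap.le_opNorm _ _)
            (ContinuousLinearMap.le_opNorm _ _)
      _ ≤ (K' * ‖x - y‖) * B + G * (K * ‖x - y‖) := by
          gcongr
          · exact hK'.norm_sub_le x y
          · exact hB x hx
          · exact (norm_nonneg _).trans (hG y)
          · exact hG y
          · exact hw.norm_sub_le x y
      _ = (K' * B + G * K) * ‖x - y‖ := by ring
  refine ⟨(K' * B + G * K).toNNReal, LipschitzWith.of_dist_le_mul fun x y => ?_⟩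
  simp only [dist_eq_norm]
  by_cases hx : x ∈ tsupport (fderiv ℝ g)
  · exact (hmem x hx y).trans (by gcongr; exact Real.le_coe_toNNReal _)
  by_cases hy : y ∈ tsupport (fderiv ℝ g)
  · rw [norm_sub_rev, norm_sub_rev x]
    exact (hmem y hy x).trans (by gcongr; exact Real.le_coe_toNNReal _)
  · simp only [image_eq_zero_of_notMem_tsupport hx, image_eq_zero_of_notMem_tsupport hy,
      zero_apply, sub_self, norm_zero]
    positivity

variable {d : ℕ} {U : Type*} {f : Ed d → P2 d → U → Ed d} {u : U} {m : ℝ → P2 d} {s T t : ℝ}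

/-- For the fixed control `u`, the dynamics `f` is `K`-Lipschitz in the state and the measure. -/
def IsLipschitzDynamics (f : Ed d → P2 d → U → Ed d) (u : U) (K : ℝ≥0) : Prop :=
  ∀ x y μ ν, ‖f x μ u - f y ν u‖ ≤ K * (‖x - y‖ + W2 μ ν)

theorem IsLipschitzDynamics.lipschitzWith (hf : IsLipschitzDynamics f u K) (μ : P2 d) :
    LipschitzWith K fun x => f x μ u :=
  LipschitzWith.of_dist_le_mul fun x y => by
    simpa [W2_self, dist_eq_norm] using hf x y μ μ

theorem IsLipschitzDynamics.norm_sub_le (hf : IsLipschitzDynamics f u K) (x : Ed d)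
    (μ ν : P2 d) : ‖f x μ u - f x ν u‖ ≤ K * W2 μ ν := by
  simpa using hf x x μ ν

theorem IsLipschitzDynamics.exists_norm_le (hf : IsLipschitzDynamics f u K)
    (hm : W2ContinuousOn m s T) :
    ∃ M, 0 ≤ M ∧ ∀ t ∈ Icc s T, ∀ x, ‖f x (m t) u‖ ≤ (K + 1) * (‖x‖ + M) := by
  have hcont : ContinuousOn (fun t => f 0 (m t) u) (Icc s T) :=
    continuousOn_of_exists_norm_sub_le_mul_W2 hm fun t _ =>
      ⟨K, fun q _ => hf.norm_sub_le 0 (m q) (m t)⟩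
  obtain ⟨M, hM⟩ := isCompact_Icc.exists_bound_of_continuousOn hcont
  refine ⟨max M 0, le_max_right _ _, fun t ht x => ?_⟩
  have hx := (hf.lipschitzWith (m t)).norm_sub_le x 0
  rw [sub_zero] at hx
  have hKM : 0 ≤ K * max M 0 := by positivity
  linarith [norm_le_norm_add_norm_sub' (f x (m t) u) (f 0 (m t) u), hM t ht, le_max_left M 0,
    norm_nonneg x]

theorem continuousOn_integral_fderiv_apply_velocity (hm : W2ContinuousOn m s T)
    (hf : IsLipschitzDynamics f u K) {g : Ed d → ℝ}
    (hg : ContDiff ℝ (⊤ : ℕ∞) g) (hgc : HasCompactSupport g) :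
    ContinuousOn (fun t => ∫ x, fderiv ℝ g x (f x (m t) u) ∂(m t).1) (Icc s T) := by
  obtain ⟨G, hG⟩ := (hgc.fderiv ℝ).exists_bound_of_continuous (hg.continuous_fderiv (by simp))
  choose L hL using fun μ => exists_lipschitzWith_fderiv_apply hg hgc (hf.lipschitzWith μ)
  refine continuousOn_of_exists_norm_sub_le_mul_W2 hm fun t _ => ⟨G * K + L (m t), fun q _ => ?_⟩
  have hvelocity : ‖∫ x, fderiv ℝ g x (f x (m q) u) ∂(m q).1 -
      ∫ x, fderiv ℝ g x (f x (m t) u) ∂(m q).1‖ ≤ G * K * W2 (m q) (m t) := by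
    refine norm_integral_sub_integral_le_of_norm_sub_le
      (integrable_P2_of_lipschitzWith (hL (m q)) _) (integrable_P2_of_lipschitzWith (hL (m t)) _)
      fun x => ?_
    rw [← map_sub, mul_assoc]
    exact ContinuousLinearMap.le_of_opNorm_le_of_le _ (hG x) (hf.norm_sub_le x _ _)
  have hmeasure := norm_integral_sub_integral_le_mul_W2 (hL (m t)) (m q) (m t)
  linarith [norm_sub_le_norm_sub_add_norm_sub (∫ x, fderiv ℝ g x (f x (m q) u) ∂(m q).1)
    (∫ x, fderiv ℝ g x (f x (m t) u) ∂(m q).1) (∫ x, fderiv ℝ g x (f x (m t) u) ∂(m t).1)]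

theorem SolvesCE.hasDerivWithinAt_integral (hm : SolvesCE f u m s T)
    (hf : IsLipschitzDynamics f u K) {g : Ed d → ℝ}
    (hg : ContDiff ℝ (⊤ : ℕ∞) g) (hgc : HasCompactSupport g) (ht : t ∈ Icc s T) :
    HasDerivWithinAt (fun q => ∫ x, g x ∂(m q).1) (∫ x, fderiv ℝ g x (f x (m t) u) ∂(m t).1)
      (Icc s T) t := by
  obtain ⟨L, hL⟩ := hg.lipschitzWith_of_hasCompactSupport hgc (by simp)
  have hgv : ∀ μ, Integrable (fun x => fderiv ℝ g x (f x μ u)) μ.1 := fun μ =>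
    have ⟨_, hL'⟩ := exists_lipschitzWith_fderiv_apply hg hgc (hf.lipschitzWith μ)
    integrable_P2_of_lipschitzWith hL' μ
  refine hasDerivWithinAt_of_integral_deriv_smul_add_smul_eq_zero
    (H := fun t => ∫ x, fderiv ℝ g x (f x (m t) u) ∂(m t).1)
    (continuousOn_integral_of_lipschitzWith hm.1 hL)
    (continuousOn_integral_fderiv_apply_velocity hm.1 hf hg hgc) (fun η hη hηc hηsT => ?_) ht
  have htsupport : tsupport (fun p : Ed d × ℝ => g p.1 * η p.2) ⊆ tsupport g ×ˢ tsupport η :=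
    closure_minimal (fun p hp => ⟨subset_tsupport g (left_ne_zero_of_mul hp),
      subset_tsupport η (right_ne_zero_of_mul hp)⟩)
      ((isClosed_tsupport g).prod (isClosed_tsupport η))
  rw [← hm.2 (fun p => g p.1 * η p.2) ((hg.comp contDiff_fst).mul (hη.comp contDiff_snd))
    ((hgc.isCompact.prod hηc.isCompact).of_isClosed_subset (isClosed_tsupport _) htsupport)
    (htsupport.trans (prod_mono (subset_univ _) hηsT))]
  congr 1 with t
  have hgd : ∀ x, DifferentiableAt ℝ g x := hg.differentiable (by simp)
  have hintegrand : ∀ x, deriv (fun q => g x * η q) t +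
      fderiv ℝ (fun y => g y * η t) x (f x (m t) u) =
        deriv η t * g x + η t * fderiv ℝ g x (f x (m t) u) := fun x => by
    rw [deriv_const_mul_field, fderiv_mul_const (hgd x), smul_apply, smul_eq_mul, mul_comm (g x)]
  simp only [hintegrand]
  rw [integral_add ((integrable_P2_of_lipschitzWith hL _).const_mul _) ((hgv _).const_mul _),
    integral_const_mul, integral_const_mul, smul_eq_mul, smul_eq_mul]

end ContinuityEquation

section Transport

variable {E : Type*} [NormedAddCommGroup E] [NormedSpace ℝ E] {v : ℝ → E → E} {s T : ℝ}
  {Φ : ℝ → ℝ → E → E}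

theorem IsFlow.norm_comp_sub_sub_le {a b c C : ℝ} (hΦ : IsFlow v s T Φ) (ha : a ∈ Icc s T)
    (hb : b ∈ Icc s T) {g : E → ℝ} (hg : Differentiable ℝ g) {x : E}
    (hC : ∀ q ∈ uIcc a b, ‖fderiv ℝ g (Φ b q x) (v q (Φ b q x)) - c‖ ≤ C) :
    ‖g (Φ b a x) - g x + (b - a) * c‖ ≤ C * |b - a| := by
  have hderiv : ∀ q ∈ uIcc a b, HasDerivWithinAt (fun q => g (Φ b q x) - q * c)
      (fderiv ℝ g (Φ b q x) (v q (Φ b q x)) - c) (uIcc a b) q := fun q hq => by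
    have hflow := (hΦ.hasDerivWithinAt b hb x q (uIcc_subset_Icc ha hb hq)).mono
      (uIcc_subset_Icc ha hb)
    exact ((hg _).hasFDerivAt.comp_hasDerivWithinAt q hflow).sub (by
      simpa using (hasDerivWithinAt_id q _).mul_const c)
  have hmean := (convex_uIcc a b).norm_image_sub_le_of_norm_hasDerivWithin_le hderiv hC
    right_mem_uIcc left_mem_uIcc
  simp only [hΦ.self b hb] at hmean
  rw [abs_sub_comm]
  calc ‖g (Φ b a x) - g x + (b - a) * c‖ = ‖g (Φ b a x) - a * c - (g x - b * c)‖ := by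
        congr 1; ring
    _ ≤ C * |a - b| := hmean

variable {d : ℕ} {U : Type*} {f : Ed d → P2 d → U → Ed d} {u : U} {m : ℝ → P2 d} {K : ℝ≥0}
  {Φ : ℝ → ℝ → Ed d → Ed d} {a b : ℝ}

theorem IsFlow.eventually_norm_fderiv_apply_velocity_sub_le
    (hΦ : IsFlow (fun t x => f x (m t) u) s T Φ) (hm : W2ContinuousOn m s T)
    (hf : IsLipschitzDynamics f u K) {g : Ed d → ℝ}
    (hg : ContDiff ℝ (⊤ : ℕ∞) g) (hgc : HasCompactSupport g) (ha : a ∈ Icc s T) {η : ℝ}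
    (hη : 0 < η) : ∀ᶠ t in 𝓝[Icc s T] a, ∀ q ∈ uIcc a t, ∀ x,
      ‖fderiv ℝ g (Φ t q x) (f (Φ t q x) (m q) u) - fderiv ℝ g x (f x (m a) u)‖ ≤
        η * (1 + ‖x‖) := by
  obtain ⟨G, hG⟩ := (hgc.fderiv ℝ).exists_bound_of_continuous (hg.continuous_fderiv (by simp))
  obtain ⟨L, hL⟩ := exists_lipschitzWith_fderiv_apply hg hgc (hf.lipschitzWith (m a))
  obtain ⟨M, hM0, hM⟩ := hf.exists_norm_le hm
  have hW : ∀ᶠ q in 𝓝[Icc s T] a, G * (K * W2 (m q) (m a)) < η / 2 :=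
    (((tendsto_W2_of_W2ContinuousOn hm ha).const_mul _).const_mul _).eventually_lt_const
      (by simpa using half_pos hη)
  have hexp0 : Tendsto (fun t => L * ((1 + M) * (Real.exp ((K + 1) * |t - a|) - 1)))
      (𝓝[Icc s T] a) (𝓝 0) :=
    tendsto_nhdsWithin_of_tendsto_nhds (Continuous.tendsto' (by fun_prop) _ _ (by simp))
  filter_upwards [eventually_forall_uIcc ha hW, hexp0.eventually_lt_const (half_pos hη),
    self_mem_nhdsWithin] with t hWt hexpt ht q hq x
  have hdisp : ‖Φ t q x - x‖ ≤ (‖x‖ + M) * (Real.exp ((K + 1) * |t - a|) - 1) := by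
    refine (hΦ.norm_sub_le (by positivity) ht (uIcc_subset_Icc ha ht hq)
      (fun r hr => hM r (uIcc_subset_Icc ht (uIcc_subset_Icc ha ht hq) hr)) x).trans ?_
    have hqt : |q - t| ≤ |t - a| := by
      rw [abs_sub_comm q]
      exact abs_sub_right_of_mem_uIcc hq
    gcongr
  have hε : 0 ≤ Real.exp ((K + 1) * |t - a|) - 1 :=
    sub_nonneg.2 (Real.one_le_exp (by positivity))
  calc ‖fderiv ℝ g (Φ t q x) (f (Φ t q x) (m q) u) - fderiv ℝ g x (f x (m a) u)‖
      = ‖fderiv ℝ g (Φ t q x) (f (Φ t q x) (m q) u - f (Φ t q x) (m a) u) +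
          (fderiv ℝ g (Φ t q x) (f (Φ t q x) (m a) u) - fderiv ℝ g x (f x (m a) u))‖ := by
        rw [map_sub, sub_add_sub_cancel]
    _ ≤ G * (K * W2 (m q) (m a)) + L * ‖Φ t q x - x‖ :=
        norm_add_le_of_le (ContinuousLinearMap.le_of_opNorm_le_of_le _ (hG _)
          (hf.norm_sub_le _ _ _)) (hL.norm_sub_le _ _)
    _ ≤ η / 2 + L * ((‖x‖ + M) * (Real.exp ((K + 1) * |t - a|) - 1)) := by
        gcongr
        exact (hWt q hq).le
    _ ≤ η / 2 + L * ((1 + M) * (1 + ‖x‖) * (Real.exp ((K + 1) * |t - a|) - 1)) := by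
        gcongr
        nlinarith [norm_nonneg x]
    _ ≤ η * (1 + ‖x‖) := by
        nlinarith [norm_nonneg x]

theorem IsFlow.isLittleO_integral_comp_sub_add
    (hΦ : IsFlow (fun t x => f x (m t) u) s T Φ) (hm : W2ContinuousOn m s T)
    (hf : IsLipschitzDynamics f u K) {g : Ed d → ℝ}
    (hg : ContDiff ℝ (⊤ : ℕ∞) g) (hgc : HasCompactSupport g) (ha : a ∈ Icc s T) :
    (fun t => ∫ x, (g (Φ t a x) - g x + (t - a) * fderiv ℝ g x (f x (m a) u)) ∂(m t).1)
      =o[𝓝[Icc s T] a] fun t => t - a := by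
  have hmoment : ContinuousOn (fun t => ∫ x, ‖x‖ ∂(m t).1) (Icc s T) :=
    continuousOn_integral_of_lipschitzWith hm lipschitzWith_one_norm
  obtain ⟨B, hB⟩ := isCompact_Icc.exists_bound_of_continuousOn hmoment
  refine Asymptotics.isLittleO_iff.2 fun c hc => ?_
  have hB0 : 0 < 1 + B := add_pos_of_pos_of_nonneg one_pos ((norm_nonneg _).trans (hB a ha))
  filter_upwards [hΦ.eventually_norm_fderiv_apply_velocity_sub_le hm hf hg hgc ha
    (div_pos hc hB0), self_mem_nhdsWithin] with t hremainder ht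
  have hint : Integrable (fun x : Ed d => ‖x‖) (m t).1 :=
    integrable_P2_of_lipschitzWith lipschitzWith_one_norm _
  refine (norm_integral_le_of_norm_le (((integrable_const 1).add hint).const_mul
    (c / (1 + B) * |t - a|)) (Eventually.of_forall fun x => ?_)).trans ?_
  · refine (hΦ.norm_comp_sub_sub_le ha ht (hg.differentiable (by simp))
      fun q hq => hremainder q hq x).trans_eq ?_
    simp only [Pi.add_apply]
    ring
  · have hBt : ∫ x, ‖x‖ ∂(m t).1 ≤ B := (le_abs_self _).trans (hB t ht)
    rw [integral_const_mul]
    simp only [Pi.add_apply]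
    rw [integral_add (integrable_const 1) hint, integral_const, probReal_univ, one_smul]
    calc c / (1 + B) * |t - a| * (1 + ∫ x, ‖x‖ ∂(m t).1)
        ≤ c / (1 + B) * |t - a| * (1 + B) := by gcongr
      _ = c * ‖t - a‖ := by rw [Real.norm_eq_abs]; field_simp

theorem SolvesCE.hasDerivWithinAt_integral_comp_flow (hm : SolvesCE f u m s T)
    (hf : IsLipschitzDynamics f u K) (hΦ : IsFlow (fun t x => f x (m t) u) s T Φ) {g : Ed d → ℝ}
    (hg : ContDiff ℝ (⊤ : ℕ∞) g) (hgc : HasCompactSupport g) (ha : a ∈ Icc s T) :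
    HasDerivWithinAt (fun t => ∫ x, g (Φ t a x) ∂(m t).1) 0 (Icc s T) a := by
  obtain ⟨L, hL⟩ := hg.lipschitzWith_of_hasCompactSupport hgc (by simp)
  obtain ⟨L', hL'⟩ := exists_lipschitzWith_fderiv_apply hg hgc (hf.lipschitzWith (m a))
  have hΦv := fun t (_ : t ∈ Icc s T) => hf.lipschitzWith (m t)
  have hcurve := hasDerivWithinAt_iff_isLittleO.1 (hm.hasDerivWithinAt_integral hf hg hgc ha)
  have hflow := hΦ.isLittleO_integral_comp_sub_add hm.1 hf hg hgc ha
  have hderiv : (fun t => (t - a) * (∫ x, fderiv ℝ g x (f x (m a) u) ∂(m a).1 -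
      ∫ x, fderiv ℝ g x (f x (m a) u) ∂(m t).1)) =o[𝓝[Icc s T] a] fun t => t - a := by
    have hlim := (continuousOn_integral_of_lipschitzWith hm.1 hL' a ha).tendsto.const_sub
      (∫ x, fderiv ℝ g x (f x (m a) u) ∂(m a).1)
    rw [sub_self] at hlim
    simpa using (Asymptotics.isBigO_refl (fun t => t - a) _).mul_isLittleO
      ((Asymptotics.isLittleO_one_iff ℝ).2 hlim)
  rw [hasDerivWithinAt_iff_isLittleO]
  refine ((hcurve.add hflow).add hderiv).congr' (eventually_mem_nhdsWithin.mono fun t ht => ?_)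
    .rfl
  have hgΦ : Integrable (fun x => g (Φ t a x)) (m t).1 :=
    integrable_P2_of_lipschitzWith (hL.comp (hΦ.lipschitzWith hΦv ht ha)) _
  have hgt : Integrable (fun x => g x) (m t).1 := integrable_P2_of_lipschitzWith hL _
  have hgΦ_sub : Integrable (fun x => g (Φ t a x) - g x) (m t).1 := hgΦ.sub hgt
  have hsplit : ∫ x, (g (Φ t a x) - g x + (t - a) * fderiv ℝ g x (f x (m a) u)) ∂(m t).1 =
      ∫ x, g (Φ t a x) ∂(m t).1 - ∫ x, g x ∂(m t).1 +
        (t - a) * ∫ x, fderiv ℝ g x (f x (m a) u) ∂(m t).1 := by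
    rw [integral_add hgΦ_sub ((integrable_P2_of_lipschitzWith hL' _).const_mul _),
      integral_sub hgΦ hgt, integral_const_mul]
  simp only [hsplit, hΦ.self a ha, smul_eq_mul]
  ring

theorem SolvesCE.eventually_norm_integral_mollify_comp_flow_sub_le (hm : SolvesCE f u m s T)
    (hf : IsLipschitzDynamics f u K) (hΦ : IsFlow (fun t x => f x (m t) u) s T Φ)
    (β : ContDiffBump (0 : Ed d)) {L : ℝ≥0} {φ : Ed d → ℝ} (hφ : LipschitzWith L φ)
    (hφc : HasCompactSupport φ) (ha : a ∈ Icc s T) (hb : b ∈ Icc s T) {r : ℝ}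
    (hr : L * (Real.exp (K * (T - s))).toNNReal * β.rOut * K < r) :
    ∀ᶠ t in 𝓝[Icc s T] a, ‖∫ x, mollify β (φ ∘ Φ t b) x ∂(m t).1 -
      ∫ x, mollify β (φ ∘ Φ a b) x ∂(m a).1‖ ≤ r * |t - a| := by
  have hv := fun t (_ : t ∈ Icc s T) => hf.lipschitzWith (m t)
  have hψ : ∀ t ∈ Icc s T, LipschitzWith (L * (Real.exp (K * (T - s))).toNNReal) (φ ∘ Φ t b) :=
    fun t ht => hφ.comp (hΦ.lipschitzWith hv ht hb)
  rw [← NNReal.coe_mul] at hr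
  generalize L * (Real.exp (K * (T - s))).toNNReal = L' at hr hψ
  obtain ⟨r', hr', hr'r⟩ := exists_between hr
  have htransport := (hasDerivWithinAt_iff_isLittleO.1 <| hm.hasDerivWithinAt_integral_comp_flow hf
    hΦ (contDiff_mollify β (hψ a ha).continuous)
    (hasCompactSupport_mollify β (hΦ.hasCompactSupport_comp hv ha hb hφc)) ha).def
    (sub_pos.2 hr'r)
  have hlim : Tendsto (fun t => L' * β.rOut * K * Real.exp (K * |t - a|)) (𝓝[Icc s T] a)
      (𝓝 (L' * β.rOut * K)) :=
    tendsto_nhdsWithin_of_tendsto_nhds (Continuous.tendsto' (by fun_prop) _ _ (by simp))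
  filter_upwards [htransport, hlim.eventually_lt_const hr', self_mem_nhdsWithin]
    with t htransport hexp ht
  simp only [hΦ.self a ha, smul_zero, sub_zero, Real.norm_eq_abs (t - a)] at htransport
  have hcommutator : ‖∫ x, mollify β (φ ∘ Φ t b) x ∂(m t).1 -
      ∫ x, mollify β (φ ∘ Φ a b) (Φ t a x) ∂(m t).1‖ ≤ r' * |t - a| := by
    refine norm_integral_sub_integral_le_of_norm_sub_le
      (integrable_P2_of_lipschitzWith (lipschitzWith_mollify β (hψ t ht)) _)
      (integrable_P2_of_lipschitzWith
        ((lipschitzWith_mollify β (hψ a ha)).comp (hΦ.lipschitzWith hv ht ha)) _) fun x => ?_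
    have hcomp : φ ∘ Φ t b = (φ ∘ Φ a b) ∘ Φ t a :=
      funext fun x => congrArg φ (hΦ.apply_apply hv ht ha hb x).symm
    rw [hcomp]
    refine (hΦ.norm_mollify_comp_flow_sub_le β hv (hψ a ha) ht ha x).trans ?_
    rw [abs_sub_comm a]
    gcongr
  calc _ ≤ r' * |t - a| + (r - r') * |t - a| :=
        (norm_sub_le_norm_sub_add_norm_sub _ _ _).trans (add_le_add hcommutator htransport)
    _ = r * |t - a| := by ring

theorem SolvesCE.norm_integral_mollify_comp_flow_sub_le (hm : SolvesCE f u m s T)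
    (hf : IsLipschitzDynamics f u K) (hΦ : IsFlow (fun t x => f x (m t) u) s T Φ)
    (β : ContDiffBump (0 : Ed d)) {L : ℝ≥0} {φ : Ed d → ℝ} (hφ : LipschitzWith L φ)
    (hφc : HasCompactSupport φ) (ha : a ∈ Icc s T) (hb : b ∈ Icc a T) :
    ‖∫ x, mollify β φ x ∂(m b).1 - ∫ x, mollify β (φ ∘ Φ a b) x ∂(m a).1‖ ≤
      L * (Real.exp (K * (T - s))).toNNReal * β.rOut * K * (b - a) := by
  have hbsT : b ∈ Icc s T := ⟨ha.1.trans hb.1, hb.2⟩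
  have hsub : Icc a b ⊆ Icc s T := Icc_subset_Icc ha.1 hb.2
  have hself : φ ∘ Φ b b = φ := funext fun x => congrArg φ (hΦ.self b hbsT x)
  have hle := norm_image_sub_le_of_eventually_norm_sub_le
    (f := fun t => ∫ x, mollify β (φ ∘ Φ t b) x ∂(m t).1) hb.1 fun t ht r hr =>
      (hm.eventually_norm_integral_mollify_comp_flow_sub_le hf hΦ β hφ hφc (hsub ht) hbsT
        hr).filter_mono (nhdsWithin_mono t hsub)
  simpa only [hself] using hle

theorem SolvesCE.integral_comp_flow (hm : SolvesCE f u m s T)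
    (hf : IsLipschitzDynamics f u K) (hΦ : IsFlow (fun t x => f x (m t) u) s T Φ)
    {L : ℝ≥0} {φ : Ed d → ℝ} (hφ : LipschitzWith L φ)
    (hφc : HasCompactSupport φ) (ha : a ∈ Icc s T) (hb : b ∈ Icc a T) :
    ∫ x, φ (Φ a b x) ∂(m a).1 = ∫ x, φ x ∂(m b).1 := by
  have hψ := hφ.comp (hΦ.lipschitzWith (fun t _ => hf.lipschitzWith (m t)) ha
    ⟨ha.1.trans hb.1, hb.2⟩)
  have hφb := integrable_P2_of_lipschitzWith hφ (m b)
  have hψa := integrable_P2_of_lipschitzWith hψ (m a)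
  obtain ⟨c, hc⟩ : ∃ c : ℝ, ∀ ε > 0,
      ‖∫ x, φ (Φ a b x) ∂(m a).1 - ∫ x, φ x ∂(m b).1‖ ≤ c * ε := by
    refine ⟨L * (Real.exp (K * (T - s))).toNNReal * (1 + K * (b - a)) + L, fun ε hε => ?_⟩
    let β : ContDiffBump (0 : Ed d) := ⟨ε / 2, ε, half_pos hε, half_lt_self hε⟩
    have hψβ := norm_integral_sub_integral_le_of_norm_sub_le hψa
      (integrable_P2_of_lipschitzWith (lipschitzWith_mollify β hψ) _)
      fun x => (norm_sub_rev _ _).trans_le (norm_mollify_sub_self_le β hψ x)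
    have hφβ := norm_integral_sub_integral_le_of_norm_sub_le
      (integrable_P2_of_lipschitzWith (lipschitzWith_mollify β hφ) _) hφb
      fun x => norm_mollify_sub_self_le β hφ x
    have htransport := hm.norm_integral_mollify_comp_flow_sub_le hf hΦ β hφ hφc ha hb
    have htri := dist_triangle4 (∫ x, φ (Φ a b x) ∂(m a).1)
      (∫ x, mollify β (φ ∘ Φ a b) x ∂(m a).1) (∫ x, mollify β φ x ∂(m b).1) (∫ x, φ x ∂(m b).1)
    simp only [dist_eq_norm] at htri
    rw [norm_sub_rev] at htransport
    rw [NNReal.coe_mul] at hψβ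
    refine (htri.trans (add_le_add_three hψβ htransport hφβ)).trans_eq ?_
    simp only [β]
    ring
  have hlim : Tendsto (fun ε => c * ε) (𝓝[>] 0) (𝓝 0) :=
    tendsto_nhdsWithin_of_tendsto_nhds (Continuous.tendsto' (by fun_prop) _ _ (by simp))
  exact sub_eq_zero.1 (norm_le_zero_iff.1 (ge_of_tendsto hlim (eventually_mem_nhdsWithin.mono hc)))

end Transport

section MeasureExt

theorem measure_eq_of_forall_integral_eq_of_lipschitzWith {E : Type*} [MetricSpace E]
    [ProperSpace E] [MeasurableSpace E] [BorelSpace E] {μ ν : Measure E} [IsFiniteMeasure μ]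
    [IsFiniteMeasure ν] (h : ∀ (L : ℝ≥0) (φ : E → ℝ), LipschitzWith L φ → HasCompactSupport φ →
      ∫ x, φ x ∂μ = ∫ x, φ x ∂ν) : μ = ν := by
  have hcompact : ∀ C : Set E, IsCompact C → μ C = ν C := fun C hC => by
    have hδ : ∀ n : ℕ, 0 < 1 / ((n : ℝ) + 1) := fun n => Nat.one_div_pos_of_nat
    have hlim : ∀ (ρ : Measure E) [IsFiniteMeasure ρ], Tendsto (fun n =>
        ∫ x, (thickenedIndicator (hδ n) C x : ℝ) ∂ρ) atTop (𝓝 (ρ.real C)) := fun ρ _ =>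
      tendsto_integral_thickenedIndicator_of_isClosed ρ hC.isClosed hδ
        tendsto_one_div_add_atTop_nhds_zero_nat
    have heq : ∀ n : ℕ, ∫ x, (thickenedIndicator (hδ n) C x : ℝ) ∂μ =
        ∫ x, (thickenedIndicator (hδ n) C x : ℝ) ∂ν := fun n => by
      refine h _ _ (lipschitzWith_thickenedIndicator (hδ n) C)
        (HasCompactSupport.intro (hC.cthickening (r := 1 / ((n : ℝ) + 1))) fun x hx => ?_)
      rw [thickenedIndicator_zero (hδ n) C fun hx' =>
        hx (Metric.thickening_subset_cthickening _ _ hx'), NNReal.coe_zero]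
    exact (measureReal_eq_measureReal_iff).1
      (tendsto_nhds_unique (hlim μ) (by simpa only [heq] using hlim ν))
  ext A hA
  rw [hA.measure_eq_iSup_isCompact_of_ne_top (measure_ne_top μ A),
    hA.measure_eq_iSup_isCompact_of_ne_top (measure_ne_top ν A)]
  exact iSup_congr fun C => iSup_congr fun _ => iSup_congr fun hC => hcompact C hC

end MeasureExt

section Moments

theorem toReal_eLpNorm_le_mul_add {Ω F G : Type*} [MeasurableSpace Ω] [NormedAddCommGroup F]
    [NormedAddCommGroup G] {ρ : Measure Ω} [IsProbabilityMeasure ρ] {p : ℝ≥0∞} [Fact (1 ≤ p)]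
    {g : Ω → F} {k : Ω → G} (hk : MemLp k p ρ) {α β : ℝ} (hα : 0 ≤ α) (hβ : 0 ≤ β)
    (hgk : ∀ ω, ‖g ω‖ ≤ β * (‖k ω‖ + α)) :
    (eLpNorm g p ρ).toReal ≤ β * ((eLpNorm k p ρ).toReal + α) := by
  have hp : p ≠ 0 := (zero_lt_one.trans_le Fact.out).ne'
  have hconst : eLpNorm (fun _ => α) p ρ = ENNReal.ofReal α := by
    simp [eLpNorm_const α hp (IsProbabilityMeasure.ne_zero ρ), Real.enorm_of_nonneg hα]
  have hle : eLpNorm g p ρ ≤ ENNReal.ofReal β * (eLpNorm k p ρ + ENNReal.ofReal α) := by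
    refine (eLpNorm_le_mul_eLpNorm_of_ae_le_mul (g := fun ω => ‖k ω‖ + α) (c := β)
      (Eventually.of_forall fun ω => (hgk ω).trans ?_) p).trans ?_
    · gcongr
      exact Real.le_norm_self _
    · gcongr
      exact (eLpNorm_add_le hk.1.norm aestronglyMeasurable_const Fact.out).trans_eq
        (by rw [eLpNorm_norm, hconst])
  have htop : ENNReal.ofReal β * (eLpNorm k p ρ + ENNReal.ofReal α) ≠ ⊤ :=
    ENNReal.mul_ne_top ENNReal.ofReal_ne_top (ENNReal.add_ne_top.2 ⟨hk.2.ne, ENNReal.ofReal_ne_top⟩)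
  simpa [ENNReal.toReal_add hk.2.ne, hα, hβ] using ENNReal.toReal_mono htop hle

theorem sqrt_integral_norm_sq_eq_toReal_eLpNorm {Ω F : Type*} [MeasurableSpace Ω]
    [NormedAddCommGroup F] {ρ : Measure Ω} {g : Ω → F} (hg : AEStronglyMeasurable g ρ) :
    √(∫ ω, ‖g ω‖ ^ 2 ∂ρ) = (eLpNorm g 2 ρ).toReal := by
  rw [integral_eq_lintegral_of_nonneg_ae (Eventually.of_forall fun ω => by positivity)
    (hg.norm.fun_pow 2)]
  simp only [ENNReal.ofReal_pow (norm_nonneg _), ofReal_norm, enorm_eq_nnnorm]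
  rw [lintegral_nnnorm_sq_eq_eLpNorm_sq, ENNReal.toReal_pow, Real.sqrt_sq ENNReal.toReal_nonneg]

variable {d : ℕ} {U : Type*} {f : Ed d → P2 d → U → Ed d} {u : U} {m : ℝ → P2 d} {K : ℝ≥0}
  {Φ : ℝ → ℝ → Ed d → Ed d} {C₁ s T a b t : ℝ}

theorem SolvesCE.map_flow (hm : SolvesCE f u m s T) (hf : IsLipschitzDynamics f u K)
    (hΦ : IsFlow (fun t x => f x (m t) u) s T Φ) (ha : a ∈ Icc s T) (hb : b ∈ Icc a T) :
    (m a).1.map (Φ a b) = (m b).1 := by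
  have hcont := (hΦ.lipschitzWith (fun t _ => hf.lipschitzWith (m t)) ha
    ⟨ha.1.trans hb.1, hb.2⟩).continuous
  have := Measure.isProbabilityMeasure_map (μ := (m a).1) hcont.aemeasurable
  refine measure_eq_of_forall_integral_eq_of_lipschitzWith fun L φ hφ hφc => ?_
  rw [integral_map hcont.aemeasurable hφ.continuous.aestronglyMeasurable]
  exact hm.integral_comp_flow hf hΦ hφ hφc ha hb

theorem SolvesCE.W2_le_toReal_eLpNorm_flow_sub (hm : SolvesCE f u m s T)
    (hf : IsLipschitzDynamics f u K) (hΦ : IsFlow (fun t x => f x (m t) u) s T Φ)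
    (ha : a ∈ Icc s T) (hb : b ∈ Icc a T) :
    W2 (m b) (m a) ≤ (eLpNorm (Φ a b - id) 2 (m a).1).toReal :=
  W2_le_toReal_eLpNorm_sub (hΦ.lipschitzWith (fun t _ => hf.lipschitzWith (m t)) ha
    ⟨ha.1.trans hb.1, hb.2⟩).continuous.measurable measurable_id (hm.map_flow hf hΦ ha hb)
    Measure.map_id

theorem IsFlow.toReal_eLpNorm_sub_id_le (hΦ : IsFlow (fun t x => f x (m t) u) s T Φ)
    (hC₁ : 0 ≤ C₁) (hgrowth : ∀ x μ, ‖f x μ u‖ ≤ C₁ * (1 + ‖x‖ + varsigma2 μ))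
    (ha : a ∈ Icc s T) (hb : b ∈ Icc a T) {M : ℝ} (hM : ∀ q ∈ Icc a b, varsigma2 (m q) ≤ M) :
    (eLpNorm (Φ a b - id) 2 (m a).1).toReal ≤
      (Real.exp (C₁ * (b - a)) - 1) * (varsigma2 (m a) + (1 + M)) := by
  have hM0 : 0 ≤ M := (varsigma2_nonneg _).trans (hM a (left_mem_Icc.2 hb.1))
  have hexp : 0 ≤ Real.exp (C₁ * (b - a)) - 1 :=
    sub_nonneg.2 (Real.one_le_exp (mul_nonneg hC₁ (sub_nonneg.2 hb.1)))
  have hv : ∀ q ∈ uIcc a b, ∀ x, ‖f x (m q) u‖ ≤ C₁ * (‖x‖ + (1 + M)) := fun q hq x => by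
    rw [uIcc_of_le hb.1] at hq
    exact (hgrowth x (m q)).trans (mul_le_mul_of_nonneg_left (by linarith [hM q hq]) hC₁)
  rw [varsigma2_eq_toReal_eLpNorm]
  refine toReal_eLpNorm_le_mul_add (memLp_id_P2 (m a)) (by positivity) hexp fun x => ?_
  have hx := hΦ.norm_sub_le hC₁ ha ⟨ha.1.trans hb.1, hb.2⟩ hv x
  rwa [abs_of_nonneg (sub_nonneg.2 hb.1), mul_comm] at hx

theorem SolvesCE.varsigma2_le (hm : SolvesCE f u m s T) (hf : IsLipschitzDynamics f u K)
    (hΦ : IsFlow (fun t x => f x (m t) u) s T Φ) (hC₁ : 0 ≤ C₁)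
    (hgrowth : ∀ x μ, ‖f x μ u‖ ≤ C₁ * (1 + ‖x‖ + varsigma2 μ)) (ht : t ∈ Icc s T) :
    varsigma2 (m t) ≤ (varsigma2 (m s) + C₁ * (t - s)) * Real.exp (2 * C₁ * (t - s)) := by
  have hcont : ContinuousOn (fun q => varsigma2 (m q)) (Icc s T) :=
    continuousOn_of_exists_norm_sub_le_mul_W2 hm.1 fun t _ =>
      ⟨1, fun q _ => by simpa using abs_varsigma2_sub_le_W2 (m q) (m t)⟩
  refine le_mul_exp_of_le_add_mul_exp_sub_one (fun _ _ => varsigma2_nonneg _) hcont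
    (fun a ha b hb M hM => ?_) ht
  have hW := hm.W2_le_toReal_eLpNorm_flow_sub hf hΦ ha hb
  have hdisp := hΦ.toReal_eLpNorm_sub_id_le hC₁ hgrowth ha hb hM
  linarith [le_of_abs_le (abs_varsigma2_sub_le_W2 (m b) (m a))]

theorem SolvesCE.toReal_eLpNorm_velocity_sub_le (hm : SolvesCE f u m s T)
    (hf : IsLipschitzDynamics f u K) (hΦ : IsFlow (fun t x => f x (m t) u) s T Φ)
    (ha : a ∈ Icc s T) (hb : b ∈ Icc a T) :
    (eLpNorm (fun z => f (Φ a b z) (m b) u - f z (m a) u) 2 (m a).1).toReal ≤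
      K * (2 * (eLpNorm (Φ a b - id) 2 (m a).1).toReal) := by
  have hdisp : MemLp (Φ a b - id) 2 (m a).1 :=
    (memLp_P2_of_lipschitzWith (hΦ.lipschitzWith (fun t _ => hf.lipschitzWith (m t)) ha
      ⟨ha.1.trans hb.1, hb.2⟩) (m a)).sub (memLp_id_P2 (m a))
  refine (toReal_eLpNorm_le_mul_add hdisp (W2_nonneg (m b) (m a)) K.2 fun z =>
    hf (Φ a b z) z (m b) (m a)).trans ?_
  have hW := hm.W2_le_toReal_eLpNorm_flow_sub hf hΦ ha hb
  exact mul_le_mul_of_nonneg_left (by linarith) K.2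

theorem C3const_eq (C₀ C₁ δ r R : ℝ) : C3const C₀ C₁ δ r R = C₀ * (2 * C2const C₁ δ r R) := by
  unfold C3const C2const
  ring

theorem SolvesCE.varsigma2_le_of_W2_le {mhat : P2 d} {δ R : ℝ} (hm : SolvesCE f u m s T)
    (hf : IsLipschitzDynamics f u K) (hΦ : IsFlow (fun t x => f x (m t) u) s T Φ)
    (hC₁ : 0 ≤ C₁) (hgrowth : ∀ x μ, ‖f x μ u‖ ≤ C₁ * (1 + ‖x‖ + varsigma2 μ))
    (hT : T - s ≤ δ) (hms : W2 mhat (m s) ≤ R) (ht : t ∈ Icc s T) :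
    varsigma2 (m t) ≤ (C₁ * δ + varsigma2 mhat + R) * Real.exp (2 * C₁ * δ) := by
  have hinit : varsigma2 (m s) ≤ varsigma2 mhat + R := by
    linarith [neg_le_of_abs_le (abs_varsigma2_sub_le_W2 mhat (m s))]
  have hinit0 : 0 ≤ varsigma2 (m s) := varsigma2_nonneg _
  have hts : 0 ≤ t - s := sub_nonneg.2 ht.1
  have htδ : t - s ≤ δ := (sub_le_sub_right ht.2 s).trans hT
  calc varsigma2 (m t) ≤ (varsigma2 (m s) + C₁ * (t - s)) * Real.exp (2 * C₁ * (t - s)) :=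
        hm.varsigma2_le hf hΦ hC₁ hgrowth ht
    _ ≤ (varsigma2 (m s) + C₁ * (t - s)) * Real.exp (2 * C₁ * δ) := by gcongr
    _ ≤ (varsigma2 mhat + R + C₁ * δ) * Real.exp (2 * C₁ * δ) := by gcongr
    _ = (C₁ * δ + varsigma2 mhat + R) * Real.exp (2 * C₁ * δ) := by ring

theorem SolvesCE.toReal_eLpNorm_flow_sub_id_le {mhat : P2 d} {δ R : ℝ} (hm : SolvesCE f u m s T)
    (hf : IsLipschitzDynamics f u K) (hΦ : IsFlow (fun t x => f x (m t) u) s T Φ)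
    (hC₁ : 0 ≤ C₁) (hgrowth : ∀ x μ, ‖f x μ u‖ ≤ C₁ * (1 + ‖x‖ + varsigma2 μ))
    (hT : T - s ≤ δ) (hms : W2 mhat (m s) ≤ R) (ht : t ∈ Icc s T) :
    (eLpNorm (Φ s t - id) 2 (m s).1).toReal ≤ C2const C₁ δ (varsigma2 mhat) R * (t - s) := by
  set S := (C₁ * δ + varsigma2 mhat + R) * Real.exp (2 * C₁ * δ) with hS
  have hsI : s ∈ Icc s T := left_mem_Icc.2 (ht.1.trans ht.2)
  have hbound : ∀ q ∈ Icc s T, varsigma2 (m q) ≤ S := fun q hq =>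
    hm.varsigma2_le_of_W2_le hf hΦ hC₁ hgrowth hT hms hq
  have hS0 : 0 ≤ S := (varsigma2_nonneg _).trans (hbound s hsI)
  have hts : 0 ≤ t - s := sub_nonneg.2 ht.1
  have htδ : t - s ≤ δ := (sub_le_sub_right ht.2 s).trans hT
  calc (eLpNorm (Φ s t - id) 2 (m s).1).toReal
      ≤ (Real.exp (C₁ * (t - s)) - 1) * (varsigma2 (m s) + (1 + S)) :=
        hΦ.toReal_eLpNorm_sub_id_le hC₁ hgrowth hsI ht fun q hq =>
          hbound q ⟨hq.1, hq.2.trans ht.2⟩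
    _ ≤ (C₁ * (t - s) * Real.exp (C₁ * (t - s))) * (S + (1 + S)) := by
        gcongr
        · exact add_nonneg (varsigma2_nonneg _) (by positivity)
        · exact exp_sub_one_le_mul_exp _
        · exact hbound s hsI
    _ ≤ (C₁ * (t - s) * Real.exp (C₁ * δ)) * (S + (1 + S)) := by gcongr
    _ = C2const C₁ δ (varsigma2 mhat) R * (t - s) := by
        rw [C2const, hS]
        ring

end Moments

theorem statement19_general {d : ℕ} {U : Type*} (f : Ed d → P2 d → U → Ed d) (u : U) (C₀ : ℝ≥0)
    (C₁ : ℝ) (hC₁ : 0 ≤ C₁) (hf : IsLipschitzDynamics f u C₀)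
    (hgrowth : ∀ x μ, ‖f x μ u‖ ≤ C₁ * (1 + ‖x‖ + varsigma2 μ)) (mhat : P2 d) (R δ s T : ℝ)
    (hT : T - s ≤ δ) (m : ℝ → P2 d) (hm : SolvesCE f u m s T) (hms : W2 mhat (m s) ≤ R)
    (X : Ed d → ℝ → Ed d) (hXs : ∀ z, X z s = z)
    (hX : ∀ z, ∀ t ∈ Icc s T, HasDerivWithinAt (X z) (f (X z t) (m t) u) (Icc s T) t) :
    ∀ t ∈ Icc s T, √(∫ z, ‖f (X z t) (m t) u - f z (m s) u‖ ^ 2 ∂(m s).1) ≤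
      C3const C₀ C₁ δ (varsigma2 mhat) R * (t - s) := by
  intro t ht
  have hlip : ∀ t ∈ Icc s T, LipschitzWith C₀ fun x => f x (m t) u := fun t _ =>
    hf.lipschitzWith (m t)
  have hsI : s ∈ Icc s T := left_mem_Icc.2 (ht.1.trans ht.2)
  obtain ⟨Φ, hΦ, hΦX⟩ := exists_isFlow_of_hasDerivWithinAt hlip hXs hX
  have hmeas : Continuous fun z => f (Φ s t z) (m t) u - f z (m s) u :=
    ((hlip t ht).continuous.comp (hΦ.lipschitzWith hlip hsI ht).continuous).sub
      (hlip s hsI).continuous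
  simp only [← hΦX]
  calc √(∫ z, ‖f (Φ s t z) (m t) u - f z (m s) u‖ ^ 2 ∂(m s).1)
      = (eLpNorm (fun z => f (Φ s t z) (m t) u - f z (m s) u) 2 (m s).1).toReal :=
        sqrt_integral_norm_sq_eq_toReal_eLpNorm hmeas.aestronglyMeasurable
    _ ≤ C₀ * (2 * (eLpNorm (Φ s t - id) 2 (m s).1).toReal) :=
        hm.toReal_eLpNorm_velocity_sub_le hf hΦ hsI ht
    _ ≤ C₀ * (2 * (C2const C₁ δ (varsigma2 mhat) R * (t - s))) := by
        gcongr
        exact hm.toReal_eLpNorm_flow_sub_id_le hf hΦ hC₁ hgrowth hT hms ht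
    _ = C3const C₀ C₁ δ (varsigma2 mhat) R * (t - s) := by rw [C3const_eq]; ring

/-- estimate on the oscillation of the velocity field along
characteristics. -/
theorem statement19 {d : ℕ} {U : Type*} [MetricSpace U] [CompactSpace U]
    (f : Ed d → P2 d → U → Ed d) (C₀ C₁ : ℝ) (hC₀ : 0 < C₀) (hC₁ : 0 < C₁)
    (hcont : ∀ (x : Ed d) (μ : P2 d), Continuous fun u : U => f x μ u)
    (hLip : ∀ (x y : Ed d) (μ ν : P2 d) (u : U),
      ‖f x μ u - f y ν u‖ ≤ C₀ * (‖x - y‖ + W2 μ ν))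
    (hgrowth : ∀ (x : Ed d) (μ : P2 d) (u : U), ‖f x μ u‖ ≤ C₁ * (1 + ‖x‖ + varsigma2 μ))
    (mhat : P2 d) (R δ : ℝ) (hR : 0 ≤ R) (hδ : 0 < δ) (u : U)
    (s τ : ℝ) (hτ : 0 < τ) (hτδ : τ < δ)
    (m : ℝ → P2 d) (hsol : SolvesCE f u m s (s + τ))
    (hms : W2 mhat (m s) ≤ R)
    (X : Ed d → ℝ → Ed d) (hX0 : ∀ z : Ed d, X z s = z)
    (hXode : ∀ z : Ed d, ∀ t ∈ Icc s (s + τ), HasDerivAt (X z) (f (X z t) (m t) u) t) :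
    ∀ t ∈ Icc s (s + τ),
      Real.sqrt (∫ z, ‖f (X z t) (m t) u - f z (m s) u‖ ^ 2 ∂(m s).1)
        ≤ C3const C₀ C₁ δ (varsigma2 mhat) R * (t - s) := by
  exact statement19_general f u ⟨C₀, hC₀.le⟩ C₁ hC₁.le (fun x y μ ν => hLip x y μ ν u)
    (fun x μ => hgrowth x μ u) mhat R δ s (s + τ) (by linarith) m hsol hms X hX0
    fun z t ht => (hXode z t ht).hasDerivWithinAt
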